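/- Let X = L^{p_1,1} and Y = L^{p,∞} on 𝕋 with 1 < p < p_1 < ∞. Then the pointwise product X ⊙ Y' equals the Lorentz space L^{p_2,1/2}, where Y' = L^{p',1} (p' the conjugate exponent of p) and 1/p_2 = 1 + 1/p_1 − 1/p < 1; in particular X ⊙ Y' has nontrivial Boyd indices (β_X < α_Y holds), while X does not factorize Y, i.e., X ⊙ M(X,Y) ≠ Y. -/

import Mathlib

open MeasureTheory Filter Topology ComplexConjugate
open scoped ENNReal

noncomputable section

instance fact_two_pi_pos : Fact (0 < 2 * Real.pi) := ⟨by positivity⟩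

/-- The unit circle, modelled additively as `ℝ / 2πℤ`. -/
abbrev 𝕋 := AddCircle (2 * Real.pi)

/-- Normalized Lebesgue (Haar) measure on the circle. -/
def μ : Measure 𝕋 := AddCircle.haarAddCircle

/-- A (quasi-)norm functional on measurable functions on the circle, with values in `ℝ≥0∞`. -/
abbrev NormFn := (𝕋 → ℂ) → ℝ≥0∞

/-- Membership in the function space determined by the norm functional `N`. -/
def MemN (N : NormFn) (f : 𝕋 → ℂ) : Prop :=
  AEStronglyMeasurable f μ ∧ N f < ⊤

/-- The closed unit ball of the space determined by `N`. -/
def unitBall (N : NormFn) : Set (𝕋 → ℂ) :=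
  {f | AEStronglyMeasurable f μ ∧ N f ≤ 1}

/-- The Köthe dual (associate space) norm of `N`. -/
def kdualN (N : NormFn) : NormFn := fun g =>
  ⨆ f : unitBall N, ∫⁻ t, (‖f.1 t * g t‖₊ : ℝ≥0∞) ∂μ

/-- The norm of the space `M(X,Y)` of pointwise multipliers, i.e. the operator norm of
multiplication by `a` from the space of `NX` to the space of `NY`. -/
def multN (NX NY : NormFn) : NormFn := fun a =>
  ⨆ f : unitBall NX, NY (fun t => a t * f.1 t)

/-- The norm of the pointwise product space `X ⊙ Y`. -/
def prodN (NX NY : NormFn) : NormFn := fun h =>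
  ⨅ p : {p : (𝕋 → ℂ) × (𝕋 → ℂ) //
      AEStronglyMeasurable p.1 μ ∧ AEStronglyMeasurable p.2 μ ∧
      h =ᵐ[μ] fun t => p.1 t * p.2 t},
    NX p.1.1 * NY p.1.2

/-- Membership in the Hardy space `H[X]`: membership in `X` together with the vanishing of all
negative Fourier coefficients. -/
def HardyMemN (N : NormFn) (f : 𝕋 → ℂ) : Prop :=
  AEStronglyMeasurable f μ ∧ N f < ⊤ ∧ ∀ n : ℤ, n < 0 → fourierCoeff f n = 0

/-- Operator norm of `T` from the space of `N1` to that of `N2`. -/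
def opN (N1 N2 : NormFn) (T : (𝕋 → ℂ) → (𝕋 → ℂ)) : ℝ≥0∞ :=
  ⨆ f : unitBall N1, N2 (T f.1)

/-- Operator norm of `T` restricted to the Hardy space of `N1`, measured in `N2`. -/
def hardyOpN (N1 N2 : NormFn) (T : (𝕋 → ℂ) → (𝕋 → ℂ)) : ℝ≥0∞ :=
  ⨆ f : {f : 𝕋 → ℂ // HardyMemN N1 f ∧ N1 f ≤ 1}, N2 (T f.1)

/-- `P` is (a realization of) the Riesz projection: it respects a.e. equality and, on integrable
functions, keeps the Fourier coefficients with nonnegative index and kills the others. -/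
def IsRieszProj (P : (𝕋 → ℂ) → (𝕋 → ℂ)) : Prop :=
  (∀ f g, f =ᵐ[μ] g → P f =ᵐ[μ] P g) ∧
  (∀ f g, P (f + g) =ᵐ[μ] P f + P g) ∧
  (∀ (c : ℂ) f, P (fun t => c * f t) =ᵐ[μ] fun t => c * P f t) ∧
  (∀ f, Integrable f μ → Integrable (P f) μ ∧
    ∀ n : ℤ, fourierCoeff (P f) n = if 0 ≤ n then fourierCoeff f n else 0)

/-- The flip operator `(Jf)(t) = t⁻¹ f(t⁻¹)`, written additively on `ℝ/2πℤ`. -/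
def Jflip (f : 𝕋 → ℂ) : 𝕋 → ℂ := fun x => fourier (-1) x * f (-x)

/-- The dilation operator `D_s`: `(D_s f)(e^{iθ}) = f(e^{iθs})` for `θs ∈ [0,2π)`, `0` otherwise. -/
def dilOp (s : ℝ) (f : 𝕋 → ℂ) : 𝕋 → ℂ := fun x =>
  let θ : ℝ := (AddCircle.equivIco (2 * Real.pi) 0 x : ℝ)
  if 0 ≤ s * θ ∧ s * θ < 2 * Real.pi then f ((s * θ : ℝ) : 𝕋) else 0

/-- Operator norm of the dilation `D_s` on the space of `N`. -/
def dilNorm (N : NormFn) (s : ℝ) : ℝ≥0∞ :=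
  ⨆ f : unitBall N, N (dilOp s f.1)

/-- `α` is the lower Boyd index of the space of `N`. -/
def boydLower (N : NormFn) (α : ℝ) : Prop :=
  Tendsto (fun s : ℝ => Real.log (dilNorm N (1 / s)).toReal / Real.log s) (𝓝[>] 0) (𝓝 α)

/-- `β` is the upper Boyd index of the space of `N`. -/
def boydUpper (N : NormFn) (β : ℝ) : Prop :=
  Tendsto (fun s : ℝ => Real.log (dilNorm N (1 / s)).toReal / Real.log s) atTop (𝓝 β)

/-- The space of `N` has nontrivial Boyd indices. -/
def NontrivialBoyd (N : NormFn) : Prop :=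
  ∃ α β : ℝ, 0 < α ∧ β < 1 ∧ boydLower N α ∧ boydUpper N β

/-- Trigonometric polynomials. -/
def IsTrigPoly (f : 𝕋 → ℂ) : Prop :=
  ∃ (n : ℕ) (c : ℤ → ℂ), f = fun x => ∑ k ∈ Finset.Icc (-(n : ℤ)) n, c k * fourier k x

/-- Analytic trigonometric polynomials. -/
def IsAnalyticPoly (f : 𝕋 → ℂ) : Prop :=
  ∃ (n : ℕ) (c : ℕ → ℂ), f = fun x => ∑ k ∈ Finset.range (n + 1), c k * fourier (k : ℤ) x

/-- The Fejér kernel `K_n`. -/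
def fejer (n : ℕ) : 𝕋 → ℂ := fun x =>
  ∑ k ∈ Finset.Icc (-(n : ℤ)) n, (1 - (|(k : ℝ)| / (n + 1)) : ℂ) * fourier k x

/-- Convolution with the Fejér kernel, `f * K_n`. -/
def convFejer (n : ℕ) (f : 𝕋 → ℂ) : 𝕋 → ℂ := fun x =>
  ∫ y, f y * fejer n (x - y) ∂μ

/-- The Banach envelope norm of `N`. -/
def envN (N : NormFn) : NormFn := fun f =>
  ⨅ d : {d : Σ n : ℕ, Fin n → 𝕋 → ℂ // f =ᵐ[μ] fun t => ∑ i, d.2 i t},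
    ∑ i, N (d.1.2 i)

/-- The Banach envelope norm of the Hardy space `H[Z]` (decompositions within `H[Z]`). -/
def envHardyN (N : NormFn) : NormFn := fun f =>
  ⨅ d : {d : Σ n : ℕ, Fin n → 𝕋 → ℂ //
      (∀ i, HardyMemN N (d.2 i)) ∧ f =ᵐ[μ] fun t => ∑ i, d.2 i t},
    ∑ i, N (d.1.2 i)

/-- The norm of the 1/2-concavification `Z^{(1/2)}`: `‖f‖ = ‖|f|^{1/2}‖²`. -/
def concavHalf (N : NormFn) : NormFn := fun f =>
  (N (fun t => (Real.sqrt ‖f t‖ : ℂ))) ^ 2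

/-- `dist_{M(X,Y)}(a, conj H[M(X,Y)])`: the infimum of multiplier norms of symbols `b` whose
Fourier coefficients agree with those of `a` for positive indices. -/
def hankelDist (NX NY : NormFn) (a : 𝕋 → ℂ) : ℝ≥0∞ :=
  ⨅ b : {b : 𝕋 → ℂ // AEStronglyMeasurable b μ ∧
      ∀ k : ℤ, 0 < k → fourierCoeff b k = fourierCoeff a k},
    multN NX NY b.1

/-- The Kuratowski measure of noncompactness of the set `A`, with diameters measured by `N`. -/
def setMNC (N : NormFn) (A : Set (𝕋 → ℂ)) : ℝ≥0∞ :=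
  ⨅ d : {d : ℝ≥0∞ // ∃ (n : ℕ) (B : Fin n → Set (𝕋 → ℂ)),
      (∀ f ∈ A, ∃ i, f ∈ B i) ∧
      ∀ i, ∀ f ∈ B i, ∀ g ∈ B i, N (fun t => f t - g t) ≤ d}, d.1

/-- The decreasing rearrangement `f*` of `f`. -/
def decRearr (f : 𝕋 → ℂ) (s : ℝ) : ℝ≥0∞ :=
  sInf {l : ℝ≥0∞ | μ {t | l < (‖f t‖₊ : ℝ≥0∞)} ≤ ENNReal.ofReal s}

/-- The Lorentz norm `‖f‖_{L^{p,q}}` on the circle (total measure 1). -/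
def lorentzN (p q : ℝ≥0∞) : NormFn := fun f =>
  if q = ⊤ then ⨆ s : Set.Ioo (0 : ℝ) 1, decRearr f s.1 * ENNReal.ofReal (s.1 ^ (1 / p).toReal)
  else (∫⁻ s in Set.Ioo (0 : ℝ) 1,
      (decRearr f s * ENNReal.ofReal (s ^ (1 / p).toReal)) ^ q.toReal / ENNReal.ofReal s)
    ^ (1 / q).toReal

/-- `dist_{L^{p,q}}(a, conj H^{p,q})` expressed via matching of positive Fourier coefficients. -/
def lorDist (p q : ℝ≥0∞) (a : 𝕋 → ℂ) : ℝ≥0∞ :=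
  ⨅ b : {b : 𝕋 → ℂ // AEStronglyMeasurable b μ ∧
      ∀ k : ℤ, 0 < k → fourierCoeff b k = fourierCoeff a k},
    lorentzN p q b.1

/-- The analytic polynomial with coefficients `c 0, …, c n`. -/
def aPoly (n : ℕ) (c : ℕ → ℂ) : 𝕋 → ℂ := fun x =>
  ∑ k ∈ Finset.range (n + 1), c k * fourier (k : ℤ) x

/-- The polynomial `p^c(t) = conj (p(1/t))`, i.e. with conjugated coefficients. -/
def aPolyC (n : ℕ) (c : ℕ → ℂ) : 𝕋 → ℂ := aPoly n fun k => (starRingEnd ℂ) (c k)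

/-- A Banach function space over the circle, encoded by its norm functional. -/
structure BFS where
  N : NormFn
  ae_congr : ∀ f g, f =ᵐ[μ] g → N f = N g
  add_le : ∀ f g, N (f + g) ≤ N f + N g
  smul_eq : ∀ (c : ℂ) (f), N (fun t => c * f t) = (‖c‖₊ : ℝ≥0∞) * N f
  ideal : ∀ f g, AEStronglyMeasurable g μ → (∀ᵐ t ∂μ, ‖g t‖ ≤ ‖f t‖) → N g ≤ N f
  const_finite : N (fun _ => 1) < ⊤
  norm_eq_zero : ∀ f, AEStronglyMeasurable f μ → N f = 0 → f =ᵐ[μ] fun _ => 0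
  semiFatou : ∀ (f : ℕ → 𝕋 → ℂ) (g : 𝕋 → ℂ),
    (∀ n, AEStronglyMeasurable (f n) μ) → AEStronglyMeasurable g μ →
    (∀ᵐ t ∂μ, Monotone (fun n => ‖f n t‖) ∧
      Tendsto (fun n => ‖f n t‖) atTop (𝓝 ‖g t‖)) →
    N g < ⊤ → N g = ⨆ n, N (f n)
  complete : ∀ f : ℕ → 𝕋 → ℂ, (∀ n, AEStronglyMeasurable (f n) μ) →
    (∑' n, N (f n)) < ⊤ →
    ∃ g, AEStronglyMeasurable g μ ∧ N g < ⊤ ∧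
      Tendsto (fun n => N (fun t => g t - ∑ k ∈ Finset.range n, f k t)) atTop (𝓝 0)

/-- A quasi-Banach function space over the circle, with quasi-triangle constant `kappa`. -/
structure QBFS where
  N : NormFn
  kappa : ℝ≥0∞
  one_le_kappa : 1 ≤ kappa
  kappa_finite : kappa < ⊤
  ae_congr : ∀ f g, f =ᵐ[μ] g → N f = N g
  add_le : ∀ f g, N (f + g) ≤ kappa * (N f + N g)
  smul_eq : ∀ (c : ℂ) (f), N (fun t => c * f t) = (‖c‖₊ : ℝ≥0∞) * N f
  ideal : ∀ f g, AEStronglyMeasurable g μ → (∀ᵐ t ∂μ, ‖g t‖ ≤ ‖f t‖) → N g ≤ N f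
  const_finite : N (fun _ => 1) < ⊤
  norm_eq_zero : ∀ f, AEStronglyMeasurable f μ → N f = 0 → f =ᵐ[μ] fun _ => 0
  semiFatou : ∀ (f : ℕ → 𝕋 → ℂ) (g : 𝕋 → ℂ),
    (∀ n, AEStronglyMeasurable (f n) μ) → AEStronglyMeasurable g μ →
    (∀ᵐ t ∂μ, Monotone (fun n => ‖f n t‖) ∧
      Tendsto (fun n => ‖f n t‖) atTop (𝓝 ‖g t‖)) →
    N g < ⊤ → N g = ⨆ n, N (f n)

/-- Rearrangement invariance of the norm functional `N`. -/
def RearrInvN (N : NormFn) : Prop :=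
  ∀ f g, AEStronglyMeasurable f μ → AEStronglyMeasurable g μ →
    (∀ lam : ℝ, 0 < lam → μ {t | lam < ‖f t‖} = μ {t | lam < ‖g t‖}) →
    N f = N g

/-- `f` is an order continuous element of the space of `N`. -/
def OrderContElemN (N : NormFn) (f : 𝕋 → ℂ) : Prop :=
  MemN N f ∧ ∀ g : ℕ → 𝕋 → ℂ, (∀ n, AEStronglyMeasurable (g n) μ) →
    (∀ n, ∀ᵐ t ∂μ, ‖g n t‖ ≤ ‖f t‖) →
    (∀ᵐ t ∂μ, Tendsto (fun n => ‖g n t‖) atTop (𝓝 0)) →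
    Tendsto (fun n => N (g n)) atTop (𝓝 0)

/-- The space of `N` is order continuous (equivalently, separable). -/
def OrderContN (N : NormFn) : Prop :=
  ∀ f, MemN N f → OrderContElemN N f

/-- The Fatou property of the norm functional `N`. -/
def FatouN (N : NormFn) : Prop :=
  ∀ (f : ℕ → 𝕋 → ℂ) (g : 𝕋 → ℂ),
    (∀ n, AEStronglyMeasurable (f n) μ) → AEStronglyMeasurable g μ →
    (∀ᵐ t ∂μ, Monotone (fun n => ‖f n t‖) ∧
      Tendsto (fun n => ‖f n t‖) atTop (𝓝 ‖g t‖)) →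
    N g = ⨆ n, N (f n)


/-! ### Basic facts -/

instance mu_prob : IsProbabilityMeasure μ :=
  inferInstanceAs (IsProbabilityMeasure (AddCircle.haarAddCircle (T := 2 * Real.pi)))

/-- Distribution function. -/
def dst (f : 𝕋 → ℂ) (l : ℝ≥0∞) : ℝ≥0∞ := μ {t | l < (‖f t‖₊ : ℝ≥0∞)}

lemma dst_le_one (f : 𝕋 → ℂ) (l : ℝ≥0∞) : dst f l ≤ 1 := prob_le_one

lemma dst_anti (f : 𝕋 → ℂ) : Antitone (dst f) := fun _ _ h =>
  measure_mono fun _ ht => lt_of_le_of_lt h ht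

lemma dst_congr {f g : 𝕋 → ℂ} (h : f =ᵐ[μ] g) : dst f = dst g := by
  funext l
  apply measure_congr
  filter_upwards [h] with t ht
  apply propext
  change l < _ ↔ l < _
  rw [ht]

lemma lt_decRearr_iff (f : 𝕋 → ℂ) (l : ℝ≥0∞) (s : ℝ) :
    l < decRearr f s ↔ ENNReal.ofReal s < dst f l := by
  constructor
  · intro h
    by_contra hc
    have hc' : l ∈ {l : ℝ≥0∞ | μ {t | l < (‖f t‖₊ : ℝ≥0∞)} ≤ ENNReal.ofReal s} := not_lt.1 hc
    exact absurd (sInf_le hc') (not_le.2 h)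
  · intro h
    by_contra hc
    rw [not_lt] at hc
    refine absurd ?_ (not_le.2 h)
    rcases eq_or_ne l ⊤ with rfl | hl
    · simp [dst]
    obtain ⟨u, hu, hul, hut⟩ := exists_seq_strictAnti_tendsto' (lt_top_iff_ne_top.2 hl)
    have : {t | l < (‖f t‖₊ : ℝ≥0∞)} = ⋃ n, {t | u n < (‖f t‖₊ : ℝ≥0∞)} := by
      ext t
      simp only [Set.mem_ofPred_eq, Set.mem_iUnion]
      constructor
      · intro ht
        exact (hut.eventually_lt_const ht).exists
      · rintro ⟨n, hn⟩
        exact (hul n).1.trans hn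
    have hd : Directed (· ⊆ ·) (fun n => {t | u n < (‖f t‖₊ : ℝ≥0∞)}) := by
      apply directed_of_isDirected_le
      intro i j hij t ht
      exact lt_of_le_of_lt (hu.antitone hij) ht
    rw [dst, this, hd.measure_iUnion]
    refine iSup_le fun n => ?_
    obtain ⟨l', hl', hlt⟩ := sInf_lt_iff.1 (lt_of_le_of_lt hc (hul n).1)
    exact (dst_anti f hlt.le).trans hl'

lemma dst_decRearr_le (f : 𝕋 → ℂ) (s : ℝ) : dst f (decRearr f s) ≤ ENNReal.ofReal s := by
  by_contra h
  exact lt_irrefl _ ((lt_decRearr_iff f _ s).2 (not_le.1 h))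

lemma decRearr_le_iff (f : 𝕋 → ℂ) (l : ℝ≥0∞) (s : ℝ) :
    decRearr f s ≤ l ↔ dst f l ≤ ENNReal.ofReal s := by
  rw [← not_lt, lt_decRearr_iff, not_lt]

lemma decRearr_anti (f : 𝕋 → ℂ) : Antitone (decRearr f) := fun s s' h => by
  rw [decRearr_le_iff]
  exact (dst_decRearr_le f s).trans (ENNReal.ofReal_le_ofReal h)

lemma decRearr_meas (f : 𝕋 → ℂ) : Measurable (decRearr f) := (decRearr_anti f).measurable

lemma decRearr_eq_zero (f : 𝕋 → ℂ) {s : ℝ} (hs : 1 ≤ s) : decRearr f s = 0 := by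
  rw [← nonpos_iff_eq_zero, decRearr_le_iff]
  exact (dst_le_one f _).trans (by simpa using ENNReal.ofReal_le_ofReal hs)

lemma decRearr_mul_le (g k h : 𝕋 → ℂ) (hh : h =ᵐ[μ] fun t => g t * k t) (s : ℝ) (hs : 0 < s) :
    decRearr h (2 * s) ≤ decRearr g s * decRearr k s := by
  rw [decRearr_le_iff, dst_congr hh]
  calc dst (fun t => g t * k t) (decRearr g s * decRearr k s)
      ≤ μ ({t | decRearr g s < (‖g t‖₊ : ℝ≥0∞)} ∪ {t | decRearr k s < (‖k t‖₊ : ℝ≥0∞)}) := by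
        apply measure_mono
        intro t ht
        by_contra hc
        simp only [Set.mem_union, Set.mem_ofPred_eq, not_or, not_lt] at hc
        rw [Set.mem_ofPred_eq] at ht
        refine absurd ht (not_lt.2 ?_)
        simp only [nnnorm_mul, ENNReal.coe_mul]
        exact mul_le_mul' hc.1 hc.2
    _ ≤ dst g (decRearr g s) + dst k (decRearr k s) := measure_union_le _ _
    _ ≤ ENNReal.ofReal s + ENNReal.ofReal s := add_le_add (dst_decRearr_le _ _) (dst_decRearr_le _ _)
    _ = ENNReal.ofReal (2 * s) := by rw [← ENNReal.ofReal_add hs.le hs.le, two_mul]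

lemma inner_int (D : ℝ≥0∞) (hD : D ≤ 1) (c : ℝ) (hc : 0 < c) :
    ∫⁻ s in Set.Ioo (0 : ℝ) 1, (if ENNReal.ofReal s < D then ENNReal.ofReal (s ^ (c - 1)) else 0)
      = ENNReal.ofReal (1 / c) * D ^ c := by
  lift D to NNReal using (hD.trans_lt ENNReal.one_lt_top).ne
  have h1 : (D : ℝ) ≤ 1 := by exact_mod_cast hD
  have : ∀ s ∈ Set.Ioo (0 : ℝ) 1, (if ENNReal.ofReal s < (D : ℝ≥0∞) then ENNReal.ofReal (s ^ (c - 1)) else 0)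
      = (Set.Ioo (0 : ℝ) D).indicator (fun s => ENNReal.ofReal (s ^ (c - 1))) s := by
    intro s hs
    rw [Set.indicator_apply]
    have : ENNReal.ofReal s < (D : ℝ≥0∞) ↔ s ∈ Set.Ioo (0 : ℝ) D := by
      rw [ENNReal.ofReal_lt_coe_iff hs.1.le]
      simp [hs.1]
    simp only [this]
  rw [setLIntegral_congr_fun measurableSet_Ioo this, lintegral_indicator measurableSet_Ioo,
    Measure.restrict_restrict measurableSet_Ioo]
  have : Set.Ioo (0 : ℝ) D ∩ Set.Ioo 0 1 = Set.Ioo 0 (D : ℝ) := by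
    apply Set.inter_eq_left.2
    exact Set.Ioo_subset_Ioo_right h1
  rw [this, ← ofReal_integral_eq_lintegral_ofReal]
  · rw [← integral_Ioc_eq_integral_Ioo, ← intervalIntegral.integral_of_le D.coe_nonneg,
      integral_rpow (Or.inl (by linarith))]
    rw [sub_add_cancel, Real.zero_rpow hc.ne', sub_zero, div_eq_mul_one_div, mul_comm,
      ENNReal.ofReal_mul (by positivity), ← ENNReal.ofReal_rpow_of_nonneg D.coe_nonneg hc.le]
    simp
  · have := (intervalIntegral.intervalIntegrable_rpow' (a := 0) (b := D) (r := c - 1) (by linarith))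
    rw [intervalIntegrable_iff_integrableOn_Ioc_of_le D.coe_nonneg] at this
    exact this.mono_set Set.Ioo_subset_Ioc_self
  · refine (ae_restrict_iff' measurableSet_Ioo).2 (ae_of_all _ fun s hs => ?_)
    exact Real.rpow_nonneg hs.1.le _

lemma layer (x : ℝ≥0∞) : x = ∫⁻ u in Set.Ioi (0 : ℝ), (if ENNReal.ofReal u < x then 1 else 0) := by
  have hm : MeasurableSet {u : ℝ | ENNReal.ofReal u < x} :=
    measurableSet_lt ENNReal.measurable_ofReal measurable_const
  have : (fun u : ℝ => (if ENNReal.ofReal u < x then (1 : ℝ≥0∞) else 0)) =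
      Set.indicator {u : ℝ | ENNReal.ofReal u < x} 1 := by
    funext u
    simp [Set.indicator_apply]
  rw [this, lintegral_indicator_one hm, Measure.restrict_apply hm]
  rcases eq_or_ne x ⊤ with rfl | hx
  · have : {u : ℝ | ENNReal.ofReal u < ⊤} ∩ Set.Ioi 0 = Set.Ioi 0 := by ext; simp
    rw [this, Real.volume_Ioi]
  · lift x to NNReal using hx
    have : {u : ℝ | ENNReal.ofReal u < x} ∩ Set.Ioi 0 = Set.Ioo 0 (x : ℝ) := by
      ext u
      simp only [Set.mem_inter_iff, Set.mem_ofPred_eq, Set.mem_Ioi, Set.mem_Ioo]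
      constructor
      · rintro ⟨h1, h2⟩
        exact ⟨h2, (ENNReal.ofReal_lt_coe_iff h2.le).1 h1⟩
      · rintro ⟨h1, h2⟩
        exact ⟨(ENNReal.ofReal_lt_coe_iff h1.le).2 h2, h1⟩
    rw [this, Real.volume_Ioo]
    simp

lemma main_formula (f : 𝕋 → ℂ) (a q : ℝ) (ha : 0 < a) (hq : 0 < q) :
    ∫⁻ s in Set.Ioo (0 : ℝ) 1,
      (decRearr f s * ENNReal.ofReal (s ^ a)) ^ q / ENNReal.ofReal s =
    ENNReal.ofReal (1 / (a * q)) *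
      ∫⁻ u in Set.Ioi (0 : ℝ), dst f (ENNReal.ofReal (u ^ (1 / q))) ^ (a * q) := by
  have e1 : ∀ s ∈ Set.Ioo (0 : ℝ) 1,
      (decRearr f s * ENNReal.ofReal (s ^ a)) ^ q / ENNReal.ofReal s =
      ∫⁻ u in Set.Ioi (0 : ℝ), (if ENNReal.ofReal u < decRearr f s ^ q then
        ENNReal.ofReal (s ^ (a * q - 1)) else 0) := by
    intro s hs
    have : ∀ u : ℝ, (if ENNReal.ofReal u < decRearr f s ^ q then
        ENNReal.ofReal (s ^ (a * q - 1)) else 0) =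
        (if ENNReal.ofReal u < decRearr f s ^ q then 1 else 0) * ENNReal.ofReal (s ^ (a * q - 1)) := by
      intro u
      split_ifs <;> simp
    simp only [this]
    rw [lintegral_mul_const', ← layer, ENNReal.mul_rpow_of_nonneg _ _ hq.le, mul_div_assoc]
    · congr 1
      rw [ENNReal.ofReal_rpow_of_nonneg (Real.rpow_nonneg hs.1.le _) hq.le,
        ← ENNReal.ofReal_div_of_pos hs.1, ← Real.rpow_mul hs.1.le, Real.rpow_sub_one hs.1.ne']
    · exact ENNReal.ofReal_ne_top
  rw [setLIntegral_congr_fun measurableSet_Ioo e1, lintegral_lintegral_swap,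
    ← lintegral_const_mul']
  · apply setLIntegral_congr_fun measurableSet_Ioi
    intro u hu
    have hu : 0 < u := hu
    beta_reduce
    rw [← inner_int _ (dst_le_one f _) (a * q) (by positivity)]
    apply lintegral_congr
    intro s
    have : ENNReal.ofReal u < decRearr f s ^ q ↔
        ENNReal.ofReal s < dst f (ENNReal.ofReal (u ^ (1 / q))) := by
      rw [← lt_decRearr_iff, ← ENNReal.ofReal_rpow_of_nonneg hu.le (by positivity), one_div,
        ENNReal.rpow_inv_lt_iff hq]
    simp only [this]
  · exact ENNReal.ofReal_ne_top
  · apply Measurable.aemeasurable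
    apply Measurable.ite
    · exact measurableSet_lt (by fun_prop) (((decRearr_meas f).comp measurable_fst).pow_const q)
    · fun_prop
    · fun_prop

lemma lorentz_one (p : ℝ≥0∞) (f : 𝕋 → ℂ) (ha : 0 < (1 / p).toReal) :
    lorentzN p 1 f = ENNReal.ofReal (1 / (1 / p).toReal) *
      ∫⁻ u in Set.Ioi (0 : ℝ), dst f (ENNReal.ofReal u) ^ (1 / p).toReal := by
  have := main_formula f _ 1 ha one_pos
  simp only [lorentzN, ENNReal.one_ne_top, if_false, ENNReal.toReal_one]
  rw [this]
  simp

lemma lorentz_half (p : ℝ≥0∞) (f : 𝕋 → ℂ) (ha : 0 < (1 / p).toReal) :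
    lorentzN p (1 / 2) f = (ENNReal.ofReal (2 / (1 / p).toReal) *
      ∫⁻ u in Set.Ioi (0 : ℝ), dst f (ENNReal.ofReal (u ^ 2)) ^ ((1 / p).toReal / 2)) ^ 2 := by
  have := main_formula f _ (1 / 2) ha (by norm_num)
  have h1 : (1 / 2 : ℝ≥0∞) ≠ ⊤ := by simp
  have h2 : (1 / 2 : ℝ≥0∞).toReal = 1 / 2 := by simp
  have h3 : (1 / (1 / 2) : ℝ≥0∞).toReal = 2 := by simp
  simp only [lorentzN, h1, if_false, h2, h3]
  rw [this]
  have e : 1 / ((1 / p).toReal * (1 / 2)) = 2 / (1 / p).toReal := by field_simp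
  rw [e, mul_one_div]
  simp

/-! ### Dilations -/

/-- The angle coordinate. -/
def ang (x : 𝕋) : ℝ := (AddCircle.equivIco (2 * Real.pi) 0 x : ℝ)

lemma ang_nonneg (x : 𝕋) : 0 ≤ ang x := (AddCircle.equivIco (2 * Real.pi) 0 x).2.1

lemma ang_lt (x : 𝕋) : ang x < 2 * Real.pi := by
  have := (AddCircle.equivIco (2 * Real.pi) 0 x).2.2
  exact this.trans_eq (zero_add _)

lemma coe_ang (x : 𝕋) : ((ang x : ℝ) : 𝕋) = x :=
  (AddCircle.equivIco (2 * Real.pi) 0).symm_apply_apply x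

lemma ang_coe {y : ℝ} (h0 : 0 ≤ y) (h1 : y < 2 * Real.pi) : ang (y : 𝕋) = y := by
  have h : y ∈ Set.Ico (0 : ℝ) (0 + 2 * Real.pi) := ⟨h0, by rwa [zero_add]⟩
  unfold ang
  rw [AddCircle.equivIco_coe_eq h]

lemma ang_emb : MeasurableEmbedding ang :=
  (MeasurableEmbedding.subtype_coe measurableSet_Ico).comp
    (AddCircle.measurableEquivIco (2 * Real.pi) 0).measurableEmbedding

lemma mu_eq : μ = ENNReal.ofReal (1 / (2 * Real.pi)) • (volume : Measure 𝕋) := by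
  rw [AddCircle.volume_eq_smul_haarAddCircle, smul_smul, ← ENNReal.ofReal_mul (by positivity),
    one_div, inv_mul_cancel₀ (by positivity), ENNReal.ofReal_one, one_smul]
  rfl

lemma map_ang : μ.map ang =
    ENNReal.ofReal (1 / (2 * Real.pi)) • volume.restrict (Set.Ico 0 (2 * Real.pi)) := by
  ext A hA
  have hS : MeasurableSet (ang ⁻¹' A) := ang_emb.measurable hA
  rw [ang_emb.map_apply, mu_eq, Measure.smul_apply, Measure.smul_apply]
  congr 1
  rw [← (AddCircle.measurePreserving_mk (2 * Real.pi) 0).measure_preimage hS.nullMeasurableSet,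
    zero_add, ← restrict_Ioo_eq_restrict_Ioc, ← restrict_Ioo_eq_restrict_Ico,
    Measure.restrict_apply' measurableSet_Ioo, Measure.restrict_apply' measurableSet_Ioo]
  congr 1
  ext y
  simp only [Set.mem_inter_iff, Set.mem_preimage]
  constructor
  · rintro ⟨h1, h2⟩
    rw [ang_coe h2.1.le h2.2] at h1
    exact ⟨h1, h2⟩
  · rintro ⟨h1, h2⟩
    refine ⟨?_, h2⟩
    rwa [ang_coe h2.1.le h2.2]

lemma mu_ang (A : Set ℝ) : μ (ang ⁻¹' A) =
    ENNReal.ofReal (1 / (2 * Real.pi)) * volume (A ∩ Set.Ico 0 (2 * Real.pi)) := by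
  rw [← ang_emb.map_apply, map_ang, Measure.smul_apply, Measure.restrict_apply' measurableSet_Ico,
    smul_eq_mul]

lemma dil_meas (s : ℝ) (hs : 0 < s) (S : Set 𝕋) :
    μ {x | (0 ≤ s * ang x ∧ s * ang x < 2 * Real.pi) ∧ ((s * ang x : ℝ) : 𝕋) ∈ S} ≤
      ENNReal.ofReal (1 / s) * μ S := by
  have e1 : {x | (0 ≤ s * ang x ∧ s * ang x < 2 * Real.pi) ∧ ((s * ang x : ℝ) : 𝕋) ∈ S} =
      ang ⁻¹' ((s * ·) ⁻¹' ({y : ℝ | (y : 𝕋) ∈ S} ∩ Set.Ico 0 (2 * Real.pi))) := by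
    ext x
    simp only [Set.mem_ofPred_eq, Set.mem_preimage, Set.mem_inter_iff, Set.mem_Ico]
    tauto
  have e2 : S = ang ⁻¹' {y : ℝ | (y : 𝕋) ∈ S} := by
    ext x
    simp only [Set.mem_ofPred_eq, Set.mem_preimage, coe_ang]
  rw [e1, mu_ang]
  conv_rhs => rw [e2, mu_ang]
  rw [mul_left_comm]
  refine mul_le_mul_right ?_ _
  refine (measure_mono Set.inter_subset_left).trans ?_
  rw [Real.volume_preimage_mul_left hs.ne', abs_of_pos (inv_pos.2 hs), one_div]

lemma dilOp_apply (s : ℝ) (f : 𝕋 → ℂ) (x : 𝕋) : dilOp s f x =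
    if 0 ≤ s * ang x ∧ s * ang x < 2 * Real.pi then f ((s * ang x : ℝ) : 𝕋) else 0 := rfl

lemma dst_dil (s : ℝ) (hs : 0 < s) (f : 𝕋 → ℂ) (l : ℝ≥0∞) :
    dst (dilOp s f) l ≤ ENNReal.ofReal (1 / s) * dst f l := by
  refine (measure_mono ?_).trans (dil_meas s hs _)
  intro x hx
  rw [Set.mem_ofPred_eq, dilOp_apply] at hx
  rw [Set.mem_ofPred_eq]
  split_ifs at hx with h
  · exact ⟨h, hx⟩
  · simp at hx

lemma dil_ae {f g : 𝕋 → ℂ} (s : ℝ) (hs : 0 < s) (h : f =ᵐ[μ] g) :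
    dilOp s f =ᵐ[μ] dilOp s g := by
  have h0 : μ {x | f x ≠ g x} = 0 := h
  change μ {x | dilOp s f x ≠ dilOp s g x} = 0
  rw [← nonpos_iff_eq_zero]
  refine (measure_mono ?_).trans ((dil_meas s hs {x | f x ≠ g x}).trans ?_)
  · intro x hx
    rw [Set.mem_ofPred_eq, dilOp_apply, dilOp_apply] at hx
    rw [Set.mem_ofPred_eq]
    split_ifs at hx with h
    · exact ⟨h, hx⟩
    · simp at hx
  · rw [h0, mul_zero]

lemma dil_aesm {f : 𝕋 → ℂ} (s : ℝ) (hs : 0 < s) (h : AEStronglyMeasurable f μ) :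
    AEStronglyMeasurable (dilOp s f) μ := by
  obtain ⟨g, hg, hfg⟩ := h
  refine AEStronglyMeasurable.congr ?_ (dil_ae s hs hfg).symm
  apply Measurable.aestronglyMeasurable
  have ha : Measurable ang := ang_emb.measurable
  have : dilOp s g = fun x => if 0 ≤ s * ang x ∧ s * ang x < 2 * Real.pi then
      g ((s * ang x : ℝ) : 𝕋) else 0 := rfl
  rw [this]
  apply Measurable.ite
  · apply MeasurableSet.inter
    · exact measurableSet_le measurable_const (ha.const_mul s)
    · exact measurableSet_lt (ha.const_mul s) measurable_const
  · exact hg.measurable.comp (AddCircle.measurable_mk'.comp (ha.const_mul s))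
  · exact measurable_const

lemma dil_dil_one (s : ℝ) (hs : 1 ≤ s) : dilOp (1 / s) (dilOp s (fun _ => 1)) = fun _ => 1 := by
  have h0 : 0 < s := by linarith
  funext x
  have hx := ang_nonneg x
  have hx' := ang_lt x
  have h1 : 0 ≤ 1 / s * ang x := by positivity
  have h2 : 1 / s * ang x < 2 * Real.pi := by
    refine lt_of_le_of_lt ?_ hx'
    have : 1 / s ≤ 1 := by rw [div_le_one h0]; exact hs
    nlinarith
  have h3 : s * (1 / s * ang x) = ang x := by field_simp
  rw [dilOp_apply, if_pos ⟨h1, h2⟩, dilOp_apply, ang_coe h1 h2, h3, if_pos ⟨hx, hx'⟩]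

lemma dil_smul (s : ℝ) (c : ℂ) (f : 𝕋 → ℂ) :
    dilOp s (fun t => c * f t) = fun t => c * dilOp s f t := by
  funext x
  simp only [dilOp_apply]
  split_ifs <;> simp

lemma dil_mul (s : ℝ) (f g : 𝕋 → ℂ) :
    dilOp s (fun t => f t * g t) = fun t => dilOp s f t * dilOp s g t := by
  funext x
  simp only [dilOp_apply]
  split_ifs <;> simp

/-- The properties used to compute Boyd indices. -/
structure DilGood (N : NormFn) (c : ℝ) : Prop where
  dil : ∀ f, AEStronglyMeasurable f μ → ∀ s : ℝ, 0 < s →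
    N (dilOp s f) ≤ ENNReal.ofReal (s ^ (-c)) * N f
  smul : ∀ f, ∀ r : ℝ, 0 < r → N (fun t => (r : ℂ) * f t) ≤ ENNReal.ofReal r * N f
  one_pos : N (fun _ => 1) ≠ 0
  one_fin : N (fun _ => 1) ≠ ⊤

lemma DilGood.smul_ge {N : NormFn} {c : ℝ} (h : DilGood N c) (f : 𝕋 → ℂ) (r : ℝ) (hr : 0 < r) :
    ENNReal.ofReal r * N f ≤ N (fun t => (r : ℂ) * f t) := by
  have := h.smul (fun t => (r : ℂ) * f t) r⁻¹ (inv_pos.2 hr)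
  have e : (fun t => ((r⁻¹ : ℝ) : ℂ) * ((r : ℂ) * f t)) = f := by
    funext t
    have : (r : ℂ) ≠ 0 := by exact_mod_cast hr.ne'
    push_cast
    field_simp
  rw [e] at this
  calc _ ≤ ENNReal.ofReal r * (ENNReal.ofReal r⁻¹ * N (fun t => (r : ℂ) * f t)) := by gcongr
    _ = _ := by
      rw [← mul_assoc, ← ENNReal.ofReal_mul hr.le, mul_inv_cancel₀ hr.ne', ENNReal.ofReal_one,
        one_mul]

lemma DilGood.dilNorm_eq {N : NormFn} {c : ℝ} (h : DilGood N c) (s : ℝ) (hs : 0 < s) :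
    dilNorm N (1 / s) = ENNReal.ofReal (s ^ c) := by
  have hd : (1 / s) ^ (-c) = s ^ c := by
    rw [one_div, Real.inv_rpow hs.le, Real.rpow_neg hs.le, inv_inv]
  have hsc : 0 < s ^ c := Real.rpow_pos_of_pos hs _
  apply le_antisymm
  · refine iSup_le fun f => ?_
    refine (h.dil f.1 f.2.1 (1 / s) (by positivity)).trans ?_
    rw [hd]
    calc _ ≤ ENNReal.ofReal (s ^ c) * 1 := by gcongr; exact f.2.2
      _ = _ := mul_one _
  · obtain ⟨n, hn0, hn⟩ : ∃ n : ℝ, 0 < n ∧ N (fun _ => 1) = ENNReal.ofReal n :=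
      ⟨(N (fun _ => 1)).toReal, ENNReal.toReal_pos h.one_pos h.one_fin,
        (ENNReal.ofReal_toReal h.one_fin).symm⟩
    have key : ∀ u : 𝕋 → ℂ, AEStronglyMeasurable u μ → ∀ r : ℝ, 0 < r →
        ENNReal.ofReal r * N u ≤ 1 →
        ENNReal.ofReal r * N (dilOp (1 / s) u) ≤ dilNorm N (1 / s) := by
      intro u hu r hr h1
      have hb : (fun t => (r : ℂ) * u t) ∈ unitBall N :=
        ⟨aestronglyMeasurable_const.mul hu, (h.smul u r hr).trans h1⟩
      have := le_iSup (fun f : unitBall N => N (dilOp (1 / s) f.1)) ⟨_, hb⟩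
      refine le_trans ?_ this
      rw [dil_smul]
      exact h.smul_ge _ r hr
    rcases le_total 1 s with h1 | h1
    · refine le_trans ?_ (key (dilOp s fun _ => 1) (dil_aesm s hs aestronglyMeasurable_const)
        (s ^ c * n⁻¹) (by positivity) ?_)
      · rw [dil_dil_one s h1, hn, ← ENNReal.ofReal_mul (by positivity), mul_assoc,
          inv_mul_cancel₀ hn0.ne', mul_one]
      · calc _ ≤ ENNReal.ofReal (s ^ c * n⁻¹) * (ENNReal.ofReal (s ^ (-c)) * N (fun _ => 1)) := by
              gcongr
              exact h.dil _ aestronglyMeasurable_const s hs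
          _ = 1 := by
            rw [hn, ← ENNReal.ofReal_mul (by positivity), ← ENNReal.ofReal_mul (by positivity),
              Real.rpow_neg hs.le]
            rw [show s ^ c * n⁻¹ * ((s ^ c)⁻¹ * n) = 1 by field_simp, ENNReal.ofReal_one]
    · refine le_trans ?_ (key (fun _ => 1) aestronglyMeasurable_const
        n⁻¹ (by positivity) ?_)
      · have h2 := h.dil (dilOp (1 / s) fun _ => 1)
          (dil_aesm _ (by positivity) aestronglyMeasurable_const) s hs
        have h3 := dil_dil_one (1 / s) (by rw [le_div_iff₀ hs]; linarith)
        rw [one_div_one_div] at h3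
        rw [h3, hn] at h2
        calc ENNReal.ofReal (s ^ c) = ENNReal.ofReal (s ^ c * n⁻¹) * ENNReal.ofReal n := by
              rw [← ENNReal.ofReal_mul (by positivity), mul_assoc, inv_mul_cancel₀ hn0.ne', mul_one]
          _ ≤ ENNReal.ofReal (s ^ c * n⁻¹) *
              (ENNReal.ofReal (s ^ (-c)) * N (dilOp (1 / s) fun _ => 1)) := by gcongr
          _ = _ := by
            rw [← mul_assoc, ← ENNReal.ofReal_mul (by positivity), Real.rpow_neg hs.le]
            congr 2
            field_simp
      · rw [hn, ← ENNReal.ofReal_mul (by positivity), inv_mul_cancel₀ hn0.ne', ENNReal.ofReal_one]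

lemma DilGood.quot {N : NormFn} {c : ℝ} (h : DilGood N c) (s : ℝ) (hs : 0 < s) (hs1 : s ≠ 1) :
    Real.log (dilNorm N (1 / s)).toReal / Real.log s = c := by
  rw [h.dilNorm_eq s hs, ENNReal.toReal_ofReal (Real.rpow_nonneg hs.le _), Real.log_rpow hs]
  have : Real.log s ≠ 0 := Real.log_ne_zero_of_pos_of_ne_one hs hs1
  field_simp

lemma DilGood.upper {N : NormFn} {c : ℝ} (h : DilGood N c) : boydUpper N c := by
  refine tendsto_const_nhds.congr' ?_
  filter_upwards [eventually_gt_atTop (1 : ℝ)] with s hs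
  exact (h.quot s (by linarith) hs.ne').symm

lemma DilGood.lower {N : NormFn} {c : ℝ} (h : DilGood N c) : boydLower N c := by
  refine tendsto_const_nhds.congr' ?_
  filter_upwards [Ioo_mem_nhdsGT (zero_lt_one' ℝ)] with s hs
  exact (h.quot s hs.1 hs.2.ne).symm

lemma dst_smul (f : 𝕋 → ℂ) (r : ℝ) (hr : 0 < r) (l : ℝ≥0∞) :
    dst (fun t => (r : ℂ) * f t) l = dst f (ENNReal.ofReal r⁻¹ * l) := by
  have h0 : ENNReal.ofReal r ≠ 0 := by simpa using hr
  unfold dst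
  congr 1
  ext t
  rw [Set.mem_ofPred_eq, Set.mem_ofPred_eq, nnnorm_mul, ENNReal.coe_mul]
  have : ((‖(r : ℂ)‖₊ : NNReal) : ℝ≥0∞) = ENNReal.ofReal r := by
    rw [← enorm_eq_nnnorm, ← ofReal_norm]
    simp [abs_of_pos hr]
  rw [this, ENNReal.ofReal_inv_of_pos hr, mul_comm, mul_comm _ l, ← div_eq_mul_inv,
    ENNReal.div_lt_iff (Or.inl h0) (Or.inl ENNReal.ofReal_ne_top)]

lemma decRearr_smul (f : 𝕋 → ℂ) (r : ℝ) (hr : 0 < r) (s : ℝ) :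
    decRearr (fun t => (r : ℂ) * f t) s ≤ ENNReal.ofReal r * decRearr f s := by
  rw [decRearr_le_iff, dst_smul f r hr, ← mul_assoc, ← ENNReal.ofReal_mul (by positivity),
    inv_mul_cancel₀ hr.ne', ENNReal.ofReal_one, one_mul]
  exact dst_decRearr_le f s

lemma decRearr_dil (f : 𝕋 → ℂ) (r : ℝ) (hr : 0 < r) (s : ℝ) :
    decRearr (dilOp r f) s ≤ decRearr f (r * s) := by
  rw [decRearr_le_iff]
  refine (dst_dil r hr f _).trans ?_
  calc _ ≤ ENNReal.ofReal (1 / r) * ENNReal.ofReal (r * s) := by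
        gcongr; exact dst_decRearr_le f _
    _ = _ := by
        rw [← ENNReal.ofReal_mul (by positivity), ← mul_assoc, one_div, inv_mul_cancel₀ hr.ne',
          one_mul]

lemma lorentz_one_smul (p : ℝ≥0∞) (f : 𝕋 → ℂ) (r : ℝ) (hr : 0 < r) :
    lorentzN p 1 (fun t => (r : ℂ) * f t) ≤ ENNReal.ofReal r * lorentzN p 1 f := by
  simp only [lorentzN, ENNReal.one_ne_top, if_false, ENNReal.toReal_one, div_one, ENNReal.rpow_one]
  rw [← lintegral_const_mul' _ _ ENNReal.ofReal_ne_top]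
  apply lintegral_mono
  intro s
  beta_reduce
  rw [← mul_div_assoc, ← mul_assoc]
  gcongr
  exact decRearr_smul f r hr s

lemma dst_one (l : ℝ≥0∞) : dst (fun _ => 1) l = if l < 1 then 1 else 0 := by
  unfold dst
  split_ifs with h <;> simp [h]

lemma good_one (p : ℝ≥0∞) (ha : 0 < (1 / p).toReal) :
    DilGood (lorentzN p 1) (1 / p).toReal where
  dil f _ s hs := by
    rw [lorentz_one p _ ha, lorentz_one p _ ha, mul_left_comm]
    conv_rhs => rw [← lintegral_const_mul' (ENNReal.ofReal (s ^ (-(1 / p).toReal))) _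
      ENNReal.ofReal_ne_top]
    refine mul_le_mul_right (lintegral_mono fun u => ?_) _
    calc _ ≤ (ENNReal.ofReal (1 / s) * dst f (ENNReal.ofReal u)) ^ (1 / p).toReal := by
          gcongr; exact dst_dil s hs f _
      _ = _ := by
        rw [ENNReal.mul_rpow_of_nonneg _ _ ha.le, ENNReal.ofReal_rpow_of_pos (by positivity),
          one_div s, Real.inv_rpow hs.le, Real.rpow_neg hs.le]
  smul f r hr := lorentz_one_smul p f r hr
  one_pos := by
    rw [lorentz_one p _ ha]
    have : ∀ u ∈ Set.Ioi (0:ℝ), dst (fun _ => 1) (ENNReal.ofReal u) ^ (1 / p).toReal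
        = if ENNReal.ofReal u < 1 then 1 else 0 := by
      intro u _
      rw [dst_one]
      split_ifs
      · simp
      · rw [ENNReal.zero_rpow_of_pos ha]
    rw [setLIntegral_congr_fun measurableSet_Ioi this, ← layer, mul_one]
    simpa using ha
  one_fin := by
    rw [lorentz_one p _ ha]
    have : ∀ u ∈ Set.Ioi (0:ℝ), dst (fun _ => 1) (ENNReal.ofReal u) ^ (1 / p).toReal
        = if ENNReal.ofReal u < 1 then 1 else 0 := by
      intro u _
      rw [dst_one]
      split_ifs
      · simp
      · rw [ENNReal.zero_rpow_of_pos ha]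
    rw [setLIntegral_congr_fun measurableSet_Ioi this, ← layer, mul_one]
    exact ENNReal.ofReal_ne_top

lemma lorentz_top (p : ℝ≥0∞) (f : 𝕋 → ℂ) : lorentzN p ⊤ f =
    ⨆ s : Set.Ioo (0 : ℝ) 1, decRearr f s.1 * ENNReal.ofReal (s.1 ^ (1 / p).toReal) := by
  simp [lorentzN]

lemma le_lorentz_top (p : ℝ≥0∞) (f : 𝕋 → ℂ) (s : ℝ) (h0 : 0 < s) :
    decRearr f s * ENNReal.ofReal (s ^ (1 / p).toReal) ≤ lorentzN p ⊤ f := by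
  rcases lt_or_ge s 1 with h | h
  · rw [lorentz_top]
    exact le_iSup (fun s : Set.Ioo (0 : ℝ) 1 =>
      decRearr f s.1 * ENNReal.ofReal (s.1 ^ (1 / p).toReal)) ⟨s, h0, h⟩
  · rw [decRearr_eq_zero f h, zero_mul]
    exact zero_le

lemma good_top (p : ℝ≥0∞) (ha : 0 < (1 / p).toReal) :
    DilGood (lorentzN p ⊤) (1 / p).toReal where
  dil f _ r hr := by
    rw [lorentz_top]
    refine iSup_le fun s => ?_
    have hs := s.2.1
    calc _ ≤ decRearr f (r * s.1) * ENNReal.ofReal (s.1 ^ (1 / p).toReal) := by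
          gcongr; exact decRearr_dil f r hr _
      _ = ENNReal.ofReal (r ^ (-(1 / p).toReal)) *
          (decRearr f (r * s.1) * ENNReal.ofReal ((r * s.1) ^ (1 / p).toReal)) := by
          rw [mul_left_comm, ← ENNReal.ofReal_mul (by positivity), Real.mul_rpow hr.le hs.le,
            ← mul_assoc, ← Real.rpow_add hr]
          simp
      _ ≤ _ := by
          gcongr; exact le_lorentz_top p f _ (by positivity)
  smul f r hr := by
    rw [lorentz_top, lorentz_top, ENNReal.mul_iSup]
    refine iSup_mono fun s => ?_
    rw [← mul_assoc]
    gcongr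
    exact decRearr_smul f r hr _
  one_pos := by
    intro h
    have := le_lorentz_top p (fun _ => 1) (1 / 2) (by norm_num)
    rw [h, nonpos_iff_eq_zero, mul_eq_zero] at this
    rcases this with h | h
    · have h2 : (0 : ℝ≥0∞) < decRearr (fun _ => 1) (1 / 2) := by
        rw [lt_decRearr_iff, dst_one, if_pos one_pos]
        rw [← ENNReal.ofReal_one]
        exact (ENNReal.ofReal_lt_ofReal_iff one_pos).2 (by norm_num)
      exact h2.ne' h
    · have : 0 < (1 / 2 : ℝ) ^ (1 / p).toReal := by positivity
      rw [ENNReal.ofReal_eq_zero] at h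
      linarith
  one_fin := by
    apply ne_top_of_le_ne_top ENNReal.one_ne_top
    rw [lorentz_top]
    refine iSup_le fun s => ?_
    have h1 : decRearr (fun _ => 1) s.1 ≤ 1 := by
      rw [decRearr_le_iff, dst_one, if_neg (lt_irrefl _)]; exact zero_le
    have h2 : ENNReal.ofReal (s.1 ^ (1 / p).toReal) ≤ 1 := by
      exact ENNReal.ofReal_le_one.2 (Real.rpow_le_one s.2.1.le s.2.2.le ha.le)
    calc _ ≤ (1 : ℝ≥0∞) * 1 := mul_le_mul' h1 h2
      _ = 1 := one_mul _

/-- Boyd data of the product space. -/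
lemma good_prod (N M : NormFn) (a b : ℝ) (hN : DilGood N a) (hM : DilGood M b)
    (h0 : prodN N M (fun _ => 1) ≠ 0) : DilGood (prodN N M) (a + b) where
  dil f hf s hs := by
    conv_rhs => unfold prodN
    rw [ENNReal.mul_iInf_of_ne (by simpa using Real.rpow_pos_of_pos hs _) ENNReal.ofReal_ne_top]
    refine le_iInf fun q => ?_
    obtain ⟨⟨g, k⟩, hg, hk, he⟩ := q
    have he' : dilOp s f =ᵐ[μ] fun t => dilOp s g t * dilOp s k t := by
      rw [← dil_mul]
      exact dil_ae s hs he
    refine (iInf_le _ ⟨(dilOp s g, dilOp s k), dil_aesm s hs hg, dil_aesm s hs hk, he'⟩).trans ?_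
    refine (mul_le_mul' (hN.dil g hg s hs) (hM.dil k hk s hs)).trans ?_
    rw [mul_mul_mul_comm, ← ENNReal.ofReal_mul (by positivity), ← Real.rpow_add hs, neg_add]
  smul f r hr := by
    conv_rhs => unfold prodN
    rw [ENNReal.mul_iInf_of_ne (by simpa using hr) ENNReal.ofReal_ne_top]
    refine le_iInf fun q => ?_
    obtain ⟨⟨g, k⟩, hg, hk, he⟩ := q
    have he' : (fun t => (r : ℂ) * f t) =ᵐ[μ] fun t => ((r : ℂ) * g t) * k t := by
      filter_upwards [he] with t ht
      rw [ht, mul_assoc]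
    refine (iInf_le _ ⟨(fun t => (r : ℂ) * g t, k), aestronglyMeasurable_const.mul hg, hk,
      he'⟩).trans ?_
    rw [← mul_assoc]
    exact mul_le_mul' (hN.smul g r hr) le_rfl
  one_pos := h0
  one_fin := by
    refine ne_top_of_le_ne_top (ENNReal.mul_ne_top hN.one_fin hM.one_fin) ?_
    refine iInf_le_of_le ⟨(fun _ => 1, fun _ => 1), aestronglyMeasurable_const,
        aestronglyMeasurable_const, ?_⟩ le_rfl
    simp

/-! ### The product theorem -/

lemma half_cov (F : ℝ → ℝ≥0∞) (hF : Measurable F) :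
    ∫⁻ s in Set.Ioo (0 : ℝ) 1, F (s / 2) ≤ 2 * ∫⁻ s in Set.Ioo (0 : ℝ) 1, F s := by
  have hm := Real.smul_map_volume_mul_left (a := 1 / 2) (by norm_num)
  have h1 : ∫⁻ s in Set.Ioo (0 : ℝ) 1, F s =
      ENNReal.ofReal (1 / 2) * ∫⁻ s, (Set.Ioo (0 : ℝ) 1).indicator F (1 / 2 * s) := by
    rw [← lintegral_indicator measurableSet_Ioo]
    conv_lhs => rw [← hm]
    rw [lintegral_smul_measure, lintegral_map (hF.indicator measurableSet_Ioo) (by fun_prop),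
      abs_of_pos (by norm_num : (0 : ℝ) < 1 / 2), smul_eq_mul]
  rw [h1, ← mul_assoc]
  have h2 : (2 : ℝ≥0∞) * ENNReal.ofReal (1 / 2) = 1 := by
    rw [← ENNReal.ofReal_ofNat, ← ENNReal.ofReal_mul (by norm_num)]
    norm_num
  rw [h2, one_mul, ← lintegral_indicator measurableSet_Ioo]
  refine lintegral_mono fun s => ?_
  by_cases hs : s ∈ Set.Ioo (0 : ℝ) 1
  · have hs' : 1 / 2 * s ∈ Set.Ioo (0 : ℝ) 1 := by
      constructor <;> linarith [hs.1, hs.2]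
    rw [Set.indicator_of_mem hs, Set.indicator_of_mem hs']
    apply le_of_eq
    congr 1
    ring
  · rw [Set.indicator_of_notMem hs]
    exact zero_le

lemma lorentz_one_def (p : ℝ≥0∞) (f : 𝕋 → ℂ) : lorentzN p 1 f =
    ∫⁻ s in Set.Ioo (0 : ℝ) 1, decRearr f s * ENNReal.ofReal (s ^ (1 / p).toReal) /
      ENNReal.ofReal s := by
  simp only [lorentzN, ENNReal.one_ne_top, if_false, ENNReal.toReal_one, div_one, ENNReal.rpow_one]

lemma half_one (p : ℝ≥0∞) (f : 𝕋 → ℂ) :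
    ∫⁻ s in Set.Ioo (0 : ℝ) 1, decRearr f (s / 2) * ENNReal.ofReal (s ^ (1 / p).toReal) /
      ENNReal.ofReal s ≤ ENNReal.ofReal (2 ^ (1 / p).toReal) * lorentzN p 1 f := by
  set a := (1 / p).toReal with ha
  have h := half_cov (fun s => decRearr f s * ENNReal.ofReal (s ^ a) / ENNReal.ofReal s)
    (((decRearr_meas f).mul (by fun_prop)).div (by fun_prop))
  have e : ∀ s ∈ Set.Ioo (0 : ℝ) 1,
      decRearr f (s / 2) * ENNReal.ofReal (s ^ a) / ENNReal.ofReal s =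
      ENNReal.ofReal (2 ^ a / 2) *
      (decRearr f (s / 2) * ENNReal.ofReal ((s / 2) ^ a) / ENNReal.ofReal (s / 2)) := by
    intro s hs
    have hs0 := hs.1
    rw [mul_div_assoc, mul_div_assoc, ← ENNReal.ofReal_div_of_pos hs0,
      ← ENNReal.ofReal_div_of_pos (by positivity), mul_left_comm,
      ← ENNReal.ofReal_mul (by positivity)]
    congr 2
    rw [Real.div_rpow hs0.le (by norm_num)]
    field_simp
  rw [setLIntegral_congr_fun measurableSet_Ioo e, lintegral_const_mul' _ _ ENNReal.ofReal_ne_top,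
    lorentz_one_def]
  calc _ ≤ ENNReal.ofReal (2 ^ a / 2) * (2 * ∫⁻ s in Set.Ioo (0 : ℝ) 1,
        decRearr f s * ENNReal.ofReal (s ^ a) / ENNReal.ofReal s) := by gcongr
    _ = _ := by
      rw [← mul_assoc, ← ENNReal.ofReal_ofNat 2, ← ENNReal.ofReal_mul (by positivity),
        div_mul_cancel₀ _ (by norm_num)]

lemma prod_lower (p1 p' p2 : ℝ≥0∞)
    (hg : (1 / p2).toReal = (1 / p1).toReal + (1 / p').toReal)
    (g k h : 𝕋 → ℂ) (hh : h =ᵐ[μ] fun t => g t * k t) :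
    lorentzN p2 (1 / 2) h ≤ ENNReal.ofReal (2 ^ (1 / p2).toReal) *
      (lorentzN p1 1 g * lorentzN p' 1 k) := by
  have h1 : (1 / 2 : ℝ≥0∞) ≠ ⊤ := by simp
  have h2 : (1 / 2 : ℝ≥0∞).toReal = 1 / 2 := by simp
  have h3 : (1 / (1 / 2) : ℝ≥0∞).toReal = 2 := by simp
  simp only [lorentzN.eq_def p2, h1, if_false, h2, h3]
  rw [hg]
  have H1 := half_one p1 g
  have H2 := half_one p' k
  set a := (1 / p1).toReal
  set b := (1 / p').toReal
  set f1 : ℝ → ℝ≥0∞ := fun s =>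
    (decRearr g (s / 2) * ENNReal.ofReal (s ^ a) / ENNReal.ofReal s) ^ (1 / 2 : ℝ) with hf1
  set f2 : ℝ → ℝ≥0∞ := fun s =>
    (decRearr k (s / 2) * ENNReal.ofReal (s ^ b) / ENNReal.ofReal s) ^ (1 / 2 : ℝ) with hf2
  have m1 : Measurable f1 := ((((decRearr_meas g).comp (measurable_id.div_const 2)).mul
    (by fun_prop)).div (by fun_prop)).pow_const _
  have m2 : Measurable f2 := ((((decRearr_meas k).comp (measurable_id.div_const 2)).mul
    (by fun_prop)).div (by fun_prop)).pow_const _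
  have sq1 : ∀ s, f1 s ^ (2 : ℝ) =
      decRearr g (s / 2) * ENNReal.ofReal (s ^ a) / ENNReal.ofReal s := by
    intro s; rw [hf1, ← ENNReal.rpow_mul]; simp
  have sq2 : ∀ s, f2 s ^ (2 : ℝ) =
      decRearr k (s / 2) * ENNReal.ofReal (s ^ b) / ENNReal.ofReal s := by
    intro s; rw [hf2, ← ENNReal.rpow_mul]; simp
  have cs := ENNReal.lintegral_mul_le_Lp_mul_Lq (volume.restrict (Set.Ioo (0 : ℝ) 1))
    Real.HolderConjugate.two_two m1.aemeasurable m2.aemeasurable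
  simp only [sq1, sq2] at cs
  have pt : ∫⁻ s in Set.Ioo (0 : ℝ) 1,
      (decRearr h s * ENNReal.ofReal (s ^ (a + b))) ^ (1 / 2 : ℝ) / ENNReal.ofReal s ≤
      ∫⁻ s in Set.Ioo (0 : ℝ) 1, (f1 * f2) s := by
    apply setLIntegral_mono' measurableSet_Ioo
    intro s hs
    have hs0 := hs.1
    have hd := decRearr_mul_le g k h hh (s / 2) (by positivity)
    rw [mul_div_cancel₀ _ (by norm_num)] at hd
    rw [Pi.mul_apply, hf1, hf2]
    beta_reduce
    rw [← ENNReal.mul_rpow_of_nonneg _ _ (by norm_num)]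
    have e : ∀ x : ℝ≥0∞, x ^ (1 / 2 : ℝ) / ENNReal.ofReal s =
        (x / (ENNReal.ofReal s * ENNReal.ofReal s)) ^ (1 / 2 : ℝ) := by
      intro x
      rw [ENNReal.div_rpow_of_nonneg _ _ (by norm_num)]
      congr 1
      rw [← ENNReal.ofReal_mul hs0.le, ENNReal.ofReal_rpow_of_pos (by positivity),
        ← Real.sqrt_eq_rpow, Real.sqrt_mul_self hs0.le]
    rw [e]
    refine ENNReal.rpow_le_rpow ?_ (by norm_num)
    rw [Real.rpow_add hs0, ENNReal.ofReal_mul (by positivity)]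
    have hn : ENNReal.ofReal s ≠ 0 := by simpa using hs0
    rw [div_eq_mul_inv _ (ENNReal.ofReal s * ENNReal.ofReal s), div_eq_mul_inv _ (ENNReal.ofReal s),
      div_eq_mul_inv _ (ENNReal.ofReal s), ENNReal.mul_inv (Or.inl hn) (Or.inl ENNReal.ofReal_ne_top)]
    calc _ ≤ (decRearr g (s / 2) * decRearr k (s / 2)) *
          (ENNReal.ofReal (s ^ a) * ENNReal.ofReal (s ^ b)) *
          ((ENNReal.ofReal s)⁻¹ * (ENNReal.ofReal s)⁻¹) := by gcongr
      _ = _ := by ring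
  calc _ ≤ ((ENNReal.ofReal (2 ^ a) * lorentzN p1 1 g) ^ (1 / 2 : ℝ) *
        (ENNReal.ofReal (2 ^ b) * lorentzN p' 1 k) ^ (1 / 2 : ℝ)) ^ (2 : ℝ) := by
        refine ENNReal.rpow_le_rpow (pt.trans (cs.trans ?_)) (by norm_num)
        gcongr
    _ = _ := by
      rw [ENNReal.mul_rpow_of_nonneg _ _ (by norm_num), ← ENNReal.rpow_mul, ← ENNReal.rpow_mul,
        Real.rpow_add (by norm_num), ENNReal.ofReal_mul (by positivity)]
      norm_num
      ring

lemma rpow_tsum_le (x : ℤ → ℝ≥0∞) (a : ℝ) (ha : 0 < a) (ha1 : a ≤ 1) :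
    (∑' n, x n) ^ a ≤ ∑' n, x n ^ a := by
  rw [← ENNReal.le_rpow_inv_iff ha, ENNReal.tsum_eq_iSup_sum]
  refine iSup_le fun s => ?_
  rw [ENNReal.le_rpow_inv_iff ha]
  refine le_trans ?_ (ENNReal.sum_le_tsum s)
  induction s using Finset.induction_on with
  | empty => simp [ha]
  | insert i s hi ih =>
    rw [Finset.sum_insert hi, Finset.sum_insert hi]
    exact (ENNReal.rpow_add_le_add_rpow _ _ ha.le ha1).trans (add_le_add le_rfl ih)

lemma cover_bound (f : 𝕋 → ℂ) (E : ℤ → Set 𝕋) (β : ℤ → ℝ≥0∞)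
    (h : ∀ t, f t ≠ 0 → ∃ n, t ∈ E n ∧ (‖f t‖₊ : ℝ≥0∞) ≤ β n) (a : ℝ) (ha : 0 < a) (ha1 : a ≤ 1) :
    ∫⁻ u in Set.Ioi (0 : ℝ), dst f (ENNReal.ofReal u) ^ a ≤ ∑' n, β n * μ (E n) ^ a := by
  have h1 : ∀ l, dst f l ≤ ∑' n, if l < β n then μ (E n) else 0 := by
    intro l
    have : {t | l < (‖f t‖₊ : ℝ≥0∞)} ⊆ ⋃ n, {t | l < β n ∧ t ∈ E n} := by
      intro t ht
      rw [Set.mem_ofPred_eq] at ht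
      have h0 : f t ≠ 0 := by
        rintro h0
        simp [h0] at ht
      obtain ⟨n, hn, hb⟩ := h t h0
      exact Set.mem_iUnion.2 ⟨n, ht.trans_le hb, hn⟩
    refine (measure_mono this).trans ((measure_iUnion_le _).trans ?_)
    refine ENNReal.tsum_le_tsum fun n => ?_
    split_ifs with hl <;> simp [hl]
  calc _ ≤ ∫⁻ u in Set.Ioi (0 : ℝ), ∑' n,
        (if ENNReal.ofReal u < β n then 1 else 0) * μ (E n) ^ a := by
        refine lintegral_mono fun u => ?_
        refine (ENNReal.rpow_le_rpow (h1 _) ha.le).trans ((rpow_tsum_le _ a ha ha1).trans ?_)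
        refine ENNReal.tsum_le_tsum fun n => ?_
        split_ifs <;> simp [ha]
    _ = ∑' n, β n * μ (E n) ^ a := by
        rw [lintegral_tsum]
        · congr 1
          funext n
          rw [lintegral_mul_const', ← layer]
          exact ENNReal.rpow_ne_top_of_nonneg ha.le (measure_ne_top _ _)
        · intro n
          apply Measurable.aemeasurable
          apply Measurable.mul_const
          apply Measurable.ite
          · exact measurableSet_lt ENNReal.measurable_ofReal measurable_const
          · exact measurable_const
          · exact measurable_const

lemma sum_bound (h : 𝕋 → ℂ) (E : ℤ → Set 𝕋) (hE : ∀ n, ∀ t ∈ E n, (4 : ℝ) ^ n ≤ ‖h t‖)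
    (c : ℝ) (hc : 0 < c) :
    ∑' n : ℤ, ENNReal.ofReal (2 ^ n) * μ (E n) ^ c ≤
      2 * ∫⁻ u in Set.Ioi (0 : ℝ), dst h (ENNReal.ofReal (u ^ 2)) ^ c := by
  have hmono : Monotone (fun n : ℤ => (2 : ℝ) ^ n) := zpow_right_mono₀ (by norm_num)
  have hdis := hmono.pairwise_disjoint_on_Ico_pred
  calc _ ≤ ∑' n : ℤ, 2 * ∫⁻ u in Set.Ico ((2 : ℝ) ^ (Order.pred n)) (2 ^ n),
        dst h (ENNReal.ofReal (u ^ 2)) ^ c := by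
        refine ENNReal.tsum_le_tsum fun n => ?_
        have hlow : ∫⁻ u in Set.Ico ((2 : ℝ) ^ (Order.pred n)) (2 ^ n), μ (E n) ^ c ≤
            ∫⁻ u in Set.Ico ((2 : ℝ) ^ (Order.pred n)) (2 ^ n),
              dst h (ENNReal.ofReal (u ^ 2)) ^ c := by
          apply setLIntegral_mono' measurableSet_Ico
          intro u hu
          refine ENNReal.rpow_le_rpow (measure_mono fun t ht => ?_) hc.le
          rw [Set.mem_ofPred_eq]
          have h1 := hE n t ht
          have h0 : 0 < u := lt_of_lt_of_le (by positivity) hu.1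
          have h2 : u ^ 2 < 4 ^ n := by
            have : (4 : ℝ) ^ n = (2 ^ n) ^ 2 := by
              rw [← zpow_natCast, ← zpow_mul, mul_comm, zpow_mul]; norm_num
            rw [this]
            exact pow_lt_pow_left₀ hu.2 h0.le (by norm_num)
          rw [ENNReal.ofReal_lt_coe_iff (by positivity)]
          exact h2.trans_le h1
        refine le_trans (le_of_eq ?_) (mul_le_mul_right hlow 2)
        rw [setLIntegral_const, Real.volume_Ico, Order.pred_eq_sub_one, zpow_sub_one₀ (by norm_num),
          mul_left_comm, mul_comm]
        congr 1
        rw [← ENNReal.ofReal_ofNat 2, ← ENNReal.ofReal_mul (by norm_num)]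
        congr 1
        ring
    _ = 2 * ∫⁻ u in ⋃ n : ℤ, Set.Ico ((2 : ℝ) ^ (Order.pred n)) (2 ^ n),
        dst h (ENNReal.ofReal (u ^ 2)) ^ c := by
        rw [ENNReal.tsum_mul_left, lintegral_iUnion (fun _ => measurableSet_Ico) hdis]
    _ ≤ _ := by
        gcongr
        apply Set.iUnion_subset
        intro n u hu
        exact lt_of_lt_of_le (by positivity) hu.1

lemma level (r : ℝ) (hr : 0 < r) :
    (4 : ℝ) ^ ⌊Real.logb 4 r⌋ ≤ r ∧ r < 4 ^ (⌊Real.logb 4 r⌋ + 1) := by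
  constructor
  · rw [← Real.rpow_intCast, ← Real.le_logb_iff_rpow_le (by norm_num) hr]
    exact Int.floor_le _
  · rw [← Real.rpow_intCast, ← Real.logb_lt_iff_lt_rpow (by norm_num) hr]
    push_cast
    exact Int.lt_floor_add_one _

lemma split_exists (h : 𝕋 → ℂ) (hm : Measurable h) (a b : ℝ) (ha : 0 < a) (ha1 : a ≤ 1)
    (hb : 0 < b) (hb1 : b ≤ 1) :
    ∃ g k : 𝕋 → ℂ, Measurable g ∧ Measurable k ∧ (∀ t, h t = g t * k t) ∧
      ∫⁻ u in Set.Ioi (0 : ℝ), dst g (ENNReal.ofReal u) ^ a ≤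
        2 * ∫⁻ u in Set.Ioi (0 : ℝ), dst h (ENNReal.ofReal (u ^ 2)) ^ ((a + b) / 2) ∧
      ∫⁻ u in Set.Ioi (0 : ℝ), dst k (ENNReal.ofReal u) ^ b ≤
        8 * ∫⁻ u in Set.Ioi (0 : ℝ), dst h (ENNReal.ofReal (u ^ 2)) ^ ((a + b) / 2) := by
  set ν : 𝕋 → ℤ := fun t => ⌊Real.logb 4 ‖h t‖⌋ with hν
  set E : ℤ → Set 𝕋 := fun n => {t | h t ≠ 0 ∧ ν t = n} with hE
  set m : ℤ → ℝ := fun n => (μ (E n)).toReal with hmdef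
  set α : ℤ → ℝ := fun n => if m n = 0 then 1 else 2 ^ n * m n ^ ((b - a) / 2) with hα
  have hμ : ∀ n, μ (E n) = ENNReal.ofReal (m n) := fun n =>
    (ENNReal.ofReal_toReal (measure_ne_top _ _)).symm
  have hm0 : ∀ n, 0 ≤ m n := fun n => ENNReal.toReal_nonneg
  have hαpos : ∀ n, 0 < α n := by
    intro n
    rw [hα]
    dsimp only
    split_ifs with h0
    · exact one_pos
    · have := lt_of_le_of_ne (hm0 n) (Ne.symm h0)
      positivity
  have hνm : Measurable ν := by
    have : Measurable fun t => Real.logb 4 ‖h t‖ := by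
      unfold Real.logb
      exact (Real.measurable_log.comp hm.norm).div_const _
    exact this.floor
  have hαm : Measurable fun t => ((α (ν t) : ℝ) : ℂ) :=
    Complex.measurable_ofReal.comp ((measurable_from_top (f := α)).comp hνm)
  have hlev : ∀ n, ∀ t ∈ E n, (4 : ℝ) ^ n ≤ ‖h t‖ ∧ ‖h t‖ < 4 ^ (n + 1) := by
    rintro n t ⟨ht0, rfl⟩
    exact level _ (norm_pos_iff.2 ht0)
  have hS := sum_bound h E (fun n t ht => (hlev n t ht).1) ((a + b) / 2) (by positivity)
  refine ⟨fun t => if h t = 0 then 0 else ((α (ν t) : ℝ) : ℂ), fun t => h t / ((α (ν t) : ℝ) : ℂ),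
    ?_, hm.div hαm, ?_, ?_, ?_⟩
  · exact Measurable.ite (hm (measurableSet_singleton 0)) measurable_const hαm
  · intro t
    have : ((α (ν t) : ℝ) : ℂ) ≠ 0 := by exact_mod_cast (hαpos _).ne'
    beta_reduce
    split_ifs with h0
    · simp [h0]
    · field_simp
  · refine (cover_bound _ E (fun n => ENNReal.ofReal (α n)) ?_ a ha ha1).trans (le_trans ?_ hS)
    · intro t ht
      by_cases h0 : h t = 0
      · simp [h0] at ht
      refine ⟨ν t, ⟨h0, rfl⟩, ?_⟩
      rw [if_neg h0, ← enorm_eq_nnnorm, ← ofReal_norm]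
      simp [abs_of_pos (hαpos _)]
    · refine ENNReal.tsum_le_tsum fun n => ?_
      rw [hμ]
      by_cases h0 : m n = 0
      · simp [h0, ha, ENNReal.zero_rpow_of_pos, add_pos ha hb]
      · have hp := lt_of_le_of_ne (hm0 n) (Ne.symm h0)
        rw [ENNReal.ofReal_rpow_of_pos hp, ENNReal.ofReal_rpow_of_pos hp,
          ← ENNReal.ofReal_mul (hαpos n).le, ← ENNReal.ofReal_mul (by positivity)]
        apply le_of_eq
        congr 1
        simp only [hα, if_neg h0]
        rw [mul_assoc, ← Real.rpow_add hp]
        congr 2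
        ring
  · refine (cover_bound _ E (fun n => ENNReal.ofReal (4 ^ (n + 1) / α n)) ?_ b hb hb1).trans ?_
    · intro t ht
      have h0 : h t ≠ 0 := by
        rintro h0
        simp [h0] at ht
      refine ⟨ν t, ⟨h0, rfl⟩, ?_⟩
      rw [← enorm_eq_nnnorm, ← ofReal_norm]
      apply ENNReal.ofReal_le_ofReal
      rw [norm_div, Complex.norm_real, Real.norm_of_nonneg (hαpos _).le]
      have := (hlev _ t ⟨h0, rfl⟩).2.le
      have := hαpos (ν t)
      gcongr
    · have h8 : (8 : ℝ≥0∞) = 4 * 2 := by norm_num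
      rw [h8, mul_assoc]
      refine le_trans ?_ (mul_le_mul_right hS 4)
      rw [← ENNReal.tsum_mul_left]
      refine ENNReal.tsum_le_tsum fun n => ?_
      rw [hμ]
      by_cases h0 : m n = 0
      · simp [h0, hb, ENNReal.zero_rpow_of_pos, add_pos ha hb]
      · have hp := lt_of_le_of_ne (hm0 n) (Ne.symm h0)
        have := hαpos n
        rw [ENNReal.ofReal_rpow_of_pos hp, ENNReal.ofReal_rpow_of_pos hp,
          ← ENNReal.ofReal_mul (by positivity), ← ENNReal.ofReal_mul (by positivity),
          ← ENNReal.ofReal_ofNat 4, ← ENNReal.ofReal_mul (by norm_num)]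
        apply le_of_eq
        congr 1
        simp only [hα, if_neg h0]
        have e4 : (4 : ℝ) ^ (n + 1) = 4 * (2 ^ n * 2 ^ n) := by
          rw [zpow_add₀ (by norm_num), ← mul_zpow]; norm_num; ring
        have eb : m n ^ b = m n ^ ((b - a) / 2) * m n ^ ((a + b) / 2) := by
          rw [← Real.rpow_add hp]; congr 1; ring
        rw [e4, eb]
        field_simp

lemma prod_upper (p1 p' p2 : ℝ≥0∞) (ha : 0 < (1 / p1).toReal) (ha1 : (1 / p1).toReal ≤ 1)
    (hb : 0 < (1 / p').toReal) (hb1 : (1 / p').toReal ≤ 1) (hc : (1 / p2).toReal ≤ 1)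
    (hg : (1 / p2).toReal = (1 / p1).toReal + (1 / p').toReal)
    (h : 𝕋 → ℂ) (hh : AEStronglyMeasurable h μ) :
    prodN (lorentzN p1 1) (lorentzN p' 1) h ≤
      (ENNReal.ofReal (1 / (1 / p1).toReal) * ENNReal.ofReal (1 / (1 / p').toReal) * 16) *
      lorentzN p2 (1 / 2) h := by
  obtain ⟨h0, hm, he⟩ := hh
  obtain ⟨g, k, hgm, hkm, hgk, b1, b2⟩ := split_exists h0 hm.measurable _ _ ha ha1 hb hb1
  rw [lorentz_half p2 h (by rw [hg]; positivity), dst_congr he]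
  have he' : h =ᵐ[μ] fun t => g t * k t := by
    filter_upwards [he] with t ht
    rw [ht, hgk]
  refine (iInf_le _ ⟨(g, k), hgm.aestronglyMeasurable, hkm.aestronglyMeasurable, he'⟩).trans ?_
  dsimp only
  rw [lorentz_one p1 g ha, lorentz_one p' k hb]
  rw [← hg] at b1 b2
  set I := ∫⁻ u in Set.Ioi (0 : ℝ), dst h0 (ENNReal.ofReal (u ^ 2)) ^ ((1 / p2).toReal / 2)
  have hI : I ≤ ENNReal.ofReal (2 / (1 / p2).toReal) * I := by
    have : (1 : ℝ≥0∞) ≤ ENNReal.ofReal (2 / (1 / p2).toReal) := by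
      rw [ENNReal.one_le_ofReal, le_div_iff₀ (by rw [hg]; positivity)]
      linarith
    calc I = 1 * I := (one_mul _).symm
      _ ≤ _ := by gcongr
  calc _ ≤ (ENNReal.ofReal (1 / (1 / p1).toReal) * (2 * I)) *
        (ENNReal.ofReal (1 / (1 / p').toReal) * (8 * I)) := by gcongr
    _ = (ENNReal.ofReal (1 / (1 / p1).toReal) * ENNReal.ofReal (1 / (1 / p').toReal) * 16) *
        I ^ 2 := by ring
    _ ≤ _ := by gcongr

/-! ### Failure of factorization -/

lemma lorentz_ind (p : ℝ≥0∞) (ha : 0 < (1 / p).toReal) (E : Set 𝕋) :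
    lorentzN p 1 (E.indicator fun _ => 1) =
      ENNReal.ofReal (1 / (1 / p).toReal) * μ E ^ (1 / p).toReal := by
  rw [lorentz_one p _ ha]
  congr 1
  have : ∀ u ∈ Set.Ioi (0:ℝ), dst (E.indicator fun _ => 1) (ENNReal.ofReal u) ^ (1 / p).toReal
      = (if ENNReal.ofReal u < 1 then 1 else 0) * μ E ^ (1 / p).toReal := by
    intro u _
    have : dst (E.indicator fun _ => 1) (ENNReal.ofReal u) =
        if ENNReal.ofReal u < 1 then μ E else 0 := by
      unfold dst
      split_ifs with h
      · congr 1
        ext t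
        by_cases ht : t ∈ E
        · simp only [Set.mem_ofPred_eq, Set.indicator_of_mem ht, ht, iff_true]
          simpa using h
        · simp [ht]
      · rw [← nonpos_iff_eq_zero, ← measure_empty (μ := μ)]
        apply measure_mono
        intro t ht
        rw [Set.mem_ofPred_eq] at ht
        by_cases ht' : t ∈ E
        · rw [Set.indicator_of_mem ht'] at ht
          simp at ht
          simp at h
          linarith
        · simp [ht'] at ht
    rw [this]
    split_ifs
    · simp
    · rw [ENNReal.zero_rpow_of_pos ha, zero_mul]
  rw [setLIntegral_congr_fun measurableSet_Ioi this, lintegral_mul_const', ← layer, one_mul]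
  exact ENNReal.rpow_ne_top_of_nonneg ha.le (measure_ne_top _ _)

lemma mult_level (p p1 : ℝ≥0∞) (ha : 0 < (1 / p1).toReal) (hb : 0 < (1 / p).toReal)
    (m : 𝕋 → ℂ) (hm : AEStronglyMeasurable m μ)
    (hM : multN (lorentzN p1 1) (lorentzN p ⊤) m ≠ ⊤) (l d : ℝ) (hl : 0 ≤ l) (hd : 0 < d)
    (hld : dst m (ENNReal.ofReal l) = ENNReal.ofReal d) :
    l * (d / 2) ^ (1 / p).toReal ≤
      (1 / (1 / p1).toReal * d ^ (1 / p1).toReal) *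
        (multN (lorentzN p1 1) (lorentzN p ⊤) m).toReal := by
  set a := (1 / p1).toReal with ha_def
  set b := (1 / p).toReal with hb_def
  set E : Set 𝕋 := {t | ENNReal.ofReal l < (‖m t‖₊ : ℝ≥0∞)} with hE
  have hEm : NullMeasurableSet E μ := nullMeasurableSet_lt aemeasurable_const hm.enorm
  set r : ℝ := 1 / a * d ^ a with hr
  have hr0 : 0 < r := by positivity
  have hμE : μ E = ENNReal.ofReal d := hld
  have hn : lorentzN p1 1 (E.indicator fun _ => 1) = ENNReal.ofReal r := by
    rw [lorentz_ind p1 ha, hμE, ENNReal.ofReal_rpow_of_pos hd, hr, ENNReal.ofReal_mul (by positivity)]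
  have hball : (fun t => ((r⁻¹ : ℝ) : ℂ) * (E.indicator (fun _ => (1 : ℂ)) t)) ∈
      unitBall (lorentzN p1 1) := by
    refine ⟨aestronglyMeasurable_const.mul (aestronglyMeasurable_const.indicator₀ hEm), ?_⟩
    refine (lorentz_one_smul p1 _ r⁻¹ (inv_pos.2 hr0)).trans ?_
    rw [hn, ← ENNReal.ofReal_mul (by positivity), inv_mul_cancel₀ hr0.ne', ENNReal.ofReal_one]
  have h1 : lorentzN p ⊤ (fun t => m t * (((r⁻¹ : ℝ) : ℂ) * (E.indicator (fun _ => (1 : ℂ)) t))) ≤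
      multN (lorentzN p1 1) (lorentzN p ⊤) m :=
    le_iSup (fun f : unitBall (lorentzN p1 1) => lorentzN p ⊤ (fun t => m t * f.1 t)) ⟨_, hball⟩
  have h2 := (good_top p hb).smul_ge (fun t => m t * E.indicator (fun _ => (1 : ℂ)) t) r⁻¹
    (inv_pos.2 hr0)
  have e : (fun t => ((r⁻¹ : ℝ) : ℂ) * (m t * E.indicator (fun _ => (1 : ℂ)) t)) =
      fun t => m t * (((r⁻¹ : ℝ) : ℂ) * (E.indicator (fun _ => (1 : ℂ)) t)) := by
    funext t
    ring
  rw [e] at h2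
  have h3 := le_lorentz_top p (fun t => m t * E.indicator (fun _ => (1 : ℂ)) t) (d / 2)
    (by positivity)
  have h4 : ENNReal.ofReal l ≤ decRearr (fun t => m t * E.indicator (fun _ => (1 : ℂ)) t) (d / 2) := by
    apply le_of_lt
    rw [lt_decRearr_iff]
    calc ENNReal.ofReal (d / 2) < ENNReal.ofReal d :=
          (ENNReal.ofReal_lt_ofReal_iff hd).2 (by linarith)
      _ = μ E := hμE.symm
      _ ≤ _ := by
        apply measure_mono
        intro t ht
        rw [Set.mem_ofPred_eq]
        beta_reduce
        rw [Set.indicator_of_mem ht, mul_one]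
        exact ht
  have h5 : ENNReal.ofReal r⁻¹ * (ENNReal.ofReal l * ENNReal.ofReal ((d / 2) ^ b)) ≤
      multN (lorentzN p1 1) (lorentzN p ⊤) m := by
    refine le_trans ?_ (h2.trans h1)
    refine mul_le_mul_right (le_trans ?_ h3) _
    gcongr
  rw [← ENNReal.ofReal_mul hl, ← ENNReal.ofReal_mul (by positivity),
    ENNReal.ofReal_le_iff_le_toReal hM, inv_mul_le_iff₀ hr0] at h5
  exact h5

lemma mult_decRearr (p p1 : ℝ≥0∞) (ha : 0 < (1 / p1).toReal)
    (hb : (1 / p1).toReal < (1 / p).toReal)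
    (m : 𝕋 → ℂ) (hm : AEStronglyMeasurable m μ)
    (hM : multN (lorentzN p1 1) (lorentzN p ⊤) m ≠ ⊤) (s : ℝ) (hs : 0 < s) :
    decRearr m s ≤ ENNReal.ofReal ((multN (lorentzN p1 1) (lorentzN p ⊤) m).toReal *
      (2 ^ (1 / p).toReal / (1 / p1).toReal) * s ^ ((1 / p1).toReal - (1 / p).toReal)) := by
  refine le_of_forall_lt fun l hl => ?_
  obtain ⟨l', hll', hl'⟩ := exists_between hl
  refine lt_of_lt_of_le hll' ?_
  rw [lt_decRearr_iff] at hl'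
  have hlt : l' ≠ ⊤ := by
    rintro rfl
    simp [dst] at hl'
  have hdt : dst m l' ≠ ⊤ := ne_top_of_le_ne_top ENNReal.one_ne_top (dst_le_one _ _)
  have hd1 : s < (dst m l').toReal := (ENNReal.ofReal_lt_iff_lt_toReal hs.le hdt).1 hl'
  have hd0 : 0 < (dst m l').toReal := hs.trans hd1
  have key := mult_level p p1 ha (ha.trans hb) m hm hM l'.toReal (dst m l').toReal
    ENNReal.toReal_nonneg hd0 (by rw [ENNReal.ofReal_toReal hlt, ENNReal.ofReal_toReal hdt])
  rw [← ENNReal.ofReal_toReal hlt]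
  apply ENNReal.ofReal_le_ofReal
  set d := (dst m l').toReal
  set a := (1 / p1).toReal
  set b := (1 / p).toReal
  set M := (multN (lorentzN p1 1) (lorentzN p ⊤) m).toReal with hMdef
  have hM0 : 0 ≤ M := ENNReal.toReal_nonneg
  have h1 : l'.toReal ≤ M * (2 ^ b / a) * d ^ (a - b) := by
    rw [Real.div_rpow hd0.le (by norm_num)] at key
    rw [Real.rpow_sub hd0]
    have hdb : 0 < d ^ b := by positivity
    have h2b : (0 : ℝ) < 2 ^ b := by positivity
    have : l'.toReal = l'.toReal * (d ^ b / 2 ^ b) * (2 ^ b / d ^ b) := by field_simp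
    rw [this]
    calc _ ≤ (1 / a * d ^ a) * M * (2 ^ b / d ^ b) := by gcongr
      _ = _ := by field_simp
  refine h1.trans ?_
  have : d ^ (a - b) ≤ s ^ (a - b) :=
    Real.rpow_le_rpow_of_nonpos hs hd1.le (by linarith)
  gcongr

lemma inv_int_top : ∫⁻ s in Set.Ioo (0 : ℝ) (1 / 4), ENNReal.ofReal s⁻¹ = ⊤ := by
  by_contra h
  have h1 : IntegrableOn (fun s : ℝ => s⁻¹) (Set.Ioo 0 (1 / 4)) := by
    refine (lintegral_ofReal_ne_top_iff_integrable (by fun_prop) ?_).1 h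
    refine (ae_restrict_iff' measurableSet_Ioo).2 (ae_of_all _ fun s hs => ?_)
    exact inv_nonneg.2 hs.1.le
  rw [← integrableOn_Ioc_iff_integrableOn_Ioo,
    ← intervalIntegrable_iff_integrableOn_Ioc_of_le (by norm_num), intervalIntegrable_inv_iff] at h1
  rcases h1 with h1 | h1
  · norm_num at h1
  · exact h1 Set.left_mem_uIcc

/-- The function in `L^{p,∞}` which does not factor. -/
def wit (b : ℝ) : 𝕋 → ℂ := fun x => (((ang x / (2 * Real.pi)) ^ (-b) : ℝ) : ℂ)

lemma wit_meas (b : ℝ) : Measurable (wit b) := by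
  have ha : Measurable ang := ang_emb.measurable
  exact Complex.measurable_ofReal.comp ((ha.div_const _).pow_const _)

lemma wit_norm (b : ℝ) (x : 𝕋) : (‖wit b x‖₊ : ℝ≥0∞) =
    ENNReal.ofReal ((ang x / (2 * Real.pi)) ^ (-b)) := by
  have h := ang_nonneg x
  rw [← enorm_eq_nnnorm, ← ofReal_norm, wit, Complex.norm_real, Real.norm_of_nonneg]
  have := Real.pi_pos
  positivity

lemma wit_upper (b : ℝ) (hb : 0 < b) (s : ℝ) (hs : 0 < s) :
    decRearr (wit b) s ≤ ENNReal.ofReal (s ^ (-b)) := by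
  have hpi := Real.pi_pos
  rw [decRearr_le_iff]
  calc dst (wit b) (ENNReal.ofReal (s ^ (-b))) ≤ μ (ang ⁻¹' Set.Iio (2 * Real.pi * s)) := by
        apply measure_mono
        intro x hx
        rw [Set.mem_ofPred_eq, wit_norm] at hx
        by_contra hc
        rw [Set.mem_preimage, Set.mem_Iio, not_lt] at hc
        refine absurd hx (not_lt.2 (ENNReal.ofReal_le_ofReal ?_))
        apply Real.rpow_le_rpow_of_nonpos hs _ (by linarith)
        rw [le_div_iff₀ (by positivity)]
        linarith
    _ = ENNReal.ofReal (1 / (2 * Real.pi)) *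
        volume (Set.Iio (2 * Real.pi * s) ∩ Set.Ico 0 (2 * Real.pi)) := mu_ang _
    _ ≤ ENNReal.ofReal (1 / (2 * Real.pi)) * volume (Set.Ico 0 (2 * Real.pi * s)) := by
        gcongr
        intro y hy
        exact ⟨hy.2.1, hy.1⟩
    _ = ENNReal.ofReal s := by
        rw [Real.volume_Ico, ← ENNReal.ofReal_mul (by positivity)]
        congr 1
        field_simp
        ring

lemma wit_lower (b : ℝ) (hb : 0 < b) (s : ℝ) (hs : 0 < s) (hs1 : s < 1 / 2) :
    ENNReal.ofReal ((2 * s) ^ (-b)) ≤ decRearr (wit b) s := by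
  have hpi := Real.pi_pos
  apply le_of_lt
  rw [lt_decRearr_iff]
  calc ENNReal.ofReal s < ENNReal.ofReal (2 * s) :=
        (ENNReal.ofReal_lt_ofReal_iff (by positivity)).2 (by linarith)
    _ = ENNReal.ofReal (1 / (2 * Real.pi)) * volume (Set.Ioo 0 (2 * Real.pi * (2 * s))) := by
        rw [Real.volume_Ioo, ← ENNReal.ofReal_mul (by positivity)]
        congr 1
        field_simp
        ring
    _ ≤ ENNReal.ofReal (1 / (2 * Real.pi)) *
        volume (Set.Ioo 0 (2 * Real.pi * (2 * s)) ∩ Set.Ico 0 (2 * Real.pi)) := by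
        gcongr
        intro y hy
        refine ⟨hy, hy.1.le, hy.2.trans ?_⟩
        nlinarith
    _ = μ (ang ⁻¹' Set.Ioo 0 (2 * Real.pi * (2 * s))) := (mu_ang _).symm
    _ ≤ _ := by
        apply measure_mono
        intro x hx
        rw [Set.mem_ofPred_eq, wit_norm]
        have h0 : 0 < ang x := hx.1
        have h1 : ang x < 2 * Real.pi * (2 * s) := hx.2
        rw [ENNReal.ofReal_lt_ofReal_iff (by positivity)]
        apply Real.rpow_lt_rpow_of_neg (by positivity) _ (by linarith)
        rw [div_lt_iff₀ (by positivity)]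
        linarith

lemma wit_mem (p : ℝ≥0∞) (hb : 0 < (1 / p).toReal) :
    lorentzN p ⊤ (wit (1 / p).toReal) < ⊤ := by
  refine lt_of_le_of_lt ?_ ENNReal.one_lt_top
  rw [lorentz_top]
  refine iSup_le fun s => ?_
  have hs := s.2.1
  calc _ ≤ ENNReal.ofReal (s.1 ^ (-(1 / p).toReal)) * ENNReal.ofReal (s.1 ^ (1 / p).toReal) := by
        gcongr; exact wit_upper _ hb _ hs
    _ = 1 := by
        rw [← ENNReal.ofReal_mul (by positivity), ← Real.rpow_add hs]
        simp

lemma wit_not (p p1 : ℝ≥0∞) (ha : 0 < (1 / p1).toReal)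
    (hab : (1 / p1).toReal < (1 / p).toReal) :
    ¬ prodN (lorentzN p1 1) (multN (lorentzN p1 1) (lorentzN p ⊤)) (wit (1 / p).toReal) < ⊤ := by
  intro h
  obtain ⟨⟨⟨g, m⟩, hg, hm, he⟩, hlt⟩ := iInf_lt_iff.1 h
  dsimp only at hlt he hg hm
  have hb := ha.trans hab
  have base : ∀ s : ℝ, 0 < s → s < 1 / 4 →
      ENNReal.ofReal ((4 * s) ^ (-(1 / p).toReal)) ≤ decRearr g s * decRearr m s := by
    intro s hs hs1
    have := (wit_lower (1 / p).toReal hb (2 * s) (by positivity) (by linarith)).trans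
      (decRearr_mul_le g m _ he s hs)
    rwa [← mul_assoc, show (2 : ℝ) * 2 = 4 by norm_num] at this
  have fin : multN (lorentzN p1 1) (lorentzN p ⊤) m ≠ ⊤ →
      ENNReal.ofReal ((multN (lorentzN p1 1) (lorentzN p ⊤) m).toReal *
        (2 ^ (1 / p).toReal / (1 / p1).toReal)) * lorentzN p1 1 g = ⊤ := by
    intro hM
    have hd := mult_decRearr p p1 ha hab m hm hM
    set a := (1 / p1).toReal with ha_def
    set b := (1 / p).toReal with hb_def
    set C := (multN (lorentzN p1 1) (lorentzN p ⊤) m).toReal * (2 ^ b / a) with hC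
    have hC0 : 0 ≤ C := by positivity
    rw [lorentz_one_def, ← lintegral_const_mul' _ _ ENNReal.ofReal_ne_top, eq_top_iff]
    calc (⊤ : ℝ≥0∞) = ENNReal.ofReal (4 ^ (-b)) *
          ∫⁻ s in Set.Ioo (0 : ℝ) (1 / 4), ENNReal.ofReal s⁻¹ := by
          rw [inv_int_top, ENNReal.mul_top]
          have : (0 : ℝ) < 4 ^ (-b) := by positivity
          simpa using this
      _ = ∫⁻ s in Set.Ioo (0 : ℝ) (1 / 4), ENNReal.ofReal (4 ^ (-b)) * ENNReal.ofReal s⁻¹ :=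
          (lintegral_const_mul' _ _ ENNReal.ofReal_ne_top).symm
      _ ≤ ∫⁻ s in Set.Ioo (0 : ℝ) (1 / 4), ENNReal.ofReal C *
          (decRearr g s * ENNReal.ofReal (s ^ a) / ENNReal.ofReal s) := by
          apply setLIntegral_mono' measurableSet_Ioo
          intro s hs
          have hs0 := hs.1
          have h1 := (base s hs.1 hs.2).trans (mul_le_mul_right (hd s hs.1) _)
          have h2 : ENNReal.ofReal (4 ^ (-b)) * ENNReal.ofReal s⁻¹ =
              ENNReal.ofReal ((4 * s) ^ (-b)) * ENNReal.ofReal (s ^ (b - 1)) := by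
            rw [← ENNReal.ofReal_mul (by positivity), ← ENNReal.ofReal_mul (by positivity),
              Real.mul_rpow (by norm_num) hs0.le, mul_assoc, ← Real.rpow_add hs0,
              ← Real.rpow_neg_one s]
            congr 3
            ring
          rw [h2]
          refine (mul_le_mul_left h1 _).trans (le_of_eq ?_)
          rw [mul_div_assoc, mul_left_comm, ← ENNReal.ofReal_div_of_pos hs0, mul_assoc,
            ← ENNReal.ofReal_mul (by positivity), ← ENNReal.ofReal_mul hC0, mul_assoc,
            ← Real.rpow_add hs0, ← Real.rpow_sub_one hs0.ne']
          congr 4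
          ring
      _ ≤ _ := lintegral_mono_set (Set.Ioo_subset_Ioo_right (by norm_num))
  rcases ENNReal.mul_lt_top_iff.1 hlt with ⟨h1, h2⟩ | h1 | h1
  · exact (ENNReal.mul_lt_top ENNReal.ofReal_lt_top h1).ne (fin h2.ne)
  · have hmeas : Measurable fun s : ℝ =>
        decRearr g s * ENNReal.ofReal (s ^ (1 / p1).toReal) / ENNReal.ofReal s :=
      ((decRearr_meas g).mul (by fun_prop)).div (by fun_prop)
    rw [lorentz_one_def, lintegral_eq_zero_iff hmeas] at h1
    have h2 := ae_restrict_of_ae_restrict_of_subset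
      (Set.Ioo_subset_Ioo_right (by norm_num : (1 / 4 : ℝ) ≤ 1) : Set.Ioo (0 : ℝ) (1 / 4) ⊆ _) h1
    have hne : (ae (volume.restrict (Set.Ioo (0 : ℝ) (1 / 4)))).NeBot := by
      rw [ae_neBot, Ne, Measure.restrict_eq_zero, Real.volume_Ioo]
      norm_num
    obtain ⟨s, hs, hsm⟩ := (h2.and (ae_restrict_mem measurableSet_Ioo)).exists
    have hs0 := hsm.1
    beta_reduce at hs
    rw [Pi.zero_apply, ENNReal.div_eq_zero_iff, mul_eq_zero] at hs
    have hpos : 0 < s ^ (1 / p1).toReal := by positivity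
    have hpos' : 0 < (4 * s) ^ (-(1 / p).toReal) := by positivity
    rcases hs with (hs | hs) | hs
    · have := base s hsm.1 hsm.2
      rw [hs, zero_mul, nonpos_iff_eq_zero, ENNReal.ofReal_eq_zero] at this
      linarith
    · rw [ENNReal.ofReal_eq_zero] at hs
      linarith
    · exact ENNReal.ofReal_ne_top hs
  · have := fin (by rw [h1]; exact ENNReal.zero_ne_top)
    rw [h1] at this
    simp at this

/-- For `X = L^{p₁,1}` and `Y = L^{p,∞}` with `1 < p < p₁ < ∞`,
`Y' = L^{p',1}` and `X ⊙ Y' = L^{p₂,1/2}` (equivalence of quasinorms), where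
`1/p₂ = 1 + 1/p₁ - 1/p < 1`; moreover `β_X = 1/p₁ < 1/p = α_Y`, `X ⊙ Y'` has nontrivial
Boyd indices, while `X` does not factorize `Y`: `X ⊙ M(X,Y) ≠ Y`. -/
theorem lorentz_example (p p1 p' p2 : ℝ≥0∞)
    (hp : 1 < p) (hpp1 : p < p1) (hp1 : p1 < ⊤)
    (hp' : 1 / p' = 1 - 1 / p) (hp2 : 1 / p2 = 1 + 1 / p1 - 1 / p) :
    (∃ c₁ c₂ : ℝ≥0∞, 0 < c₁ ∧ c₂ < ⊤ ∧ ∀ h : 𝕋 → ℂ, AEStronglyMeasurable h μ →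
      c₁ * lorentzN p2 (1 / 2) h ≤ prodN (lorentzN p1 1) (lorentzN p' 1) h ∧
      prodN (lorentzN p1 1) (lorentzN p' 1) h ≤ c₂ * lorentzN p2 (1 / 2) h) ∧
    boydUpper (lorentzN p1 1) (1 / p1).toReal ∧
    boydLower (lorentzN p ⊤) (1 / p).toReal ∧
    (1 / p1).toReal < (1 / p).toReal ∧
    NontrivialBoyd (prodN (lorentzN p1 1) (lorentzN p' 1)) ∧
    ¬ (∀ h : 𝕋 → ℂ, AEStronglyMeasurable h μ →
        (prodN (lorentzN p1 1) (multN (lorentzN p1 1) (lorentzN p ⊤)) h < ⊤ ↔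
          lorentzN p ⊤ h < ⊤)) := by
  have hp0 : p ≠ 0 := (zero_lt_one.trans hp).ne'
  have hpt : p ≠ ⊤ := (hpp1.trans hp1).ne
  have hi : 1 / p1 < 1 / p := by
    rw [one_div, one_div]
    exact ENNReal.inv_lt_inv.2 hpp1
  have hit : 1 / p ≠ ⊤ := by rw [one_div]; exact ENNReal.inv_ne_top.2 hp0
  have hi1t : 1 / p1 ≠ ⊤ := ne_top_of_lt hi
  have hi1 : 1 / p < 1 := by
    rw [one_div]
    exact ENNReal.inv_lt_one.2 hp
  have ha : 0 < (1 / p1).toReal := by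
    apply ENNReal.toReal_pos _ hi1t
    rw [one_div]
    exact ENNReal.inv_ne_zero.2 hp1.ne
  have hab : (1 / p1).toReal < (1 / p).toReal := (ENNReal.toReal_lt_toReal hi1t hit).2 hi
  have hb1 : (1 / p).toReal < 1 := by
    have := (ENNReal.toReal_lt_toReal hit ENNReal.one_ne_top).2 hi1
    rwa [ENNReal.toReal_one] at this
  have e' : (1 / p').toReal = 1 - (1 / p).toReal := by
    rw [hp', ENNReal.toReal_sub_of_le hi1.le ENNReal.one_ne_top, ENNReal.toReal_one]
  have e2 : (1 / p2).toReal = (1 / p1).toReal + (1 / p').toReal := by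
    rw [e', hp2, ENNReal.toReal_sub_of_le (hi1.le.trans le_self_add)
      (ENNReal.add_ne_top.2 ⟨ENNReal.one_ne_top, hi1t⟩),
      ENNReal.toReal_add ENNReal.one_ne_top hi1t, ENNReal.toReal_one]
    ring
  have hb' : 0 < (1 / p').toReal := by linarith
  have hlow : ∀ h : 𝕋 → ℂ, ENNReal.ofReal ((2 ^ (1 / p2).toReal)⁻¹) * lorentzN p2 (1 / 2) h ≤
      prodN (lorentzN p1 1) (lorentzN p' 1) h := by
    intro h
    refine le_iInf fun q => ?_
    obtain ⟨⟨g, k⟩, hg, hk, he⟩ := q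
    have h2 : (0 : ℝ) < 2 ^ (1 / p2).toReal := by positivity
    refine (mul_le_mul_right (prod_lower p1 p' p2 e2 g k h he) _).trans (le_of_eq ?_)
    rw [← mul_assoc, ← ENNReal.ofReal_mul (by positivity), inv_mul_cancel₀ h2.ne',
      ENNReal.ofReal_one, one_mul]
  have hc2 : (0 : ℝ) < (2 ^ (1 / p2).toReal)⁻¹ := by positivity
  have hone : prodN (lorentzN p1 1) (lorentzN p' 1) (fun _ => 1) ≠ 0 := by
    have h1 := hlow (fun _ => 1)
    intro h0
    have hγ : 0 < (1 / p2).toReal := by linarith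
    rw [h0, nonpos_iff_eq_zero, mul_eq_zero, lorentz_half p2 _ hγ] at h1
    have : ∀ u ∈ Set.Ioi (0:ℝ), (if ENNReal.ofReal u < 1 then 1 else 0) ≤
        dst (fun _ => 1) (ENNReal.ofReal (u ^ 2)) ^ ((1 / p2).toReal / 2) := by
      intro u hu
      have hu : 0 < u := hu
      split_ifs with hu1
      · have hu2 : ENNReal.ofReal (u ^ 2) < 1 := by
          rw [ENNReal.ofReal_lt_one] at hu1 ⊢
          nlinarith
        rw [dst_one, if_pos hu2, ENNReal.one_rpow]
      · exact zero_le
    have h2 := setLIntegral_mono' (μ := volume) measurableSet_Ioi this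
    rw [← layer] at h2
    rcases h1 with h1 | h1
    · rw [ENNReal.ofReal_eq_zero] at h1
      linarith
    · rw [sq, mul_self_eq_zero, mul_eq_zero] at h1
      rcases h1 with h1 | h1
      · rw [ENNReal.ofReal_eq_zero] at h1
        have : 0 < 2 / (1 / p2).toReal := by positivity
        linarith
      · rw [h1] at h2
        simp at h2
  refine ⟨⟨ENNReal.ofReal ((2 ^ (1 / p2).toReal)⁻¹),
    ENNReal.ofReal (1 / (1 / p1).toReal) * ENNReal.ofReal (1 / (1 / p').toReal) * 16,
    ENNReal.ofReal_pos.2 hc2, ?_, fun h hh => ⟨hlow h, ?_⟩⟩,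
    (good_one p1 ha).upper, (good_top p (ha.trans hab)).lower, hab, ?_, ?_⟩
  · exact ENNReal.mul_lt_top (ENNReal.mul_lt_top ENNReal.ofReal_lt_top ENNReal.ofReal_lt_top)
      (by norm_num)
  · exact prod_upper p1 p' p2 ha (by linarith) hb' (by linarith) (by linarith) e2 h hh
  · have hG := good_prod _ _ _ _ (good_one p1 ha) (good_one p' hb') hone
    exact ⟨_, _, by linarith, by linarith, hG.lower, hG.upper⟩
  · intro hall
    exact wit_not p p1 ha hab ((hall _ (wit_meas _).aestronglyMeasurable).2
      (wit_mem p (ha.trans hab)))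
end
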